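/- For every δ, ν ∈ ℝ with 0 < δ < 1 and ν > 0, there exists a constant Δ₀(δ,ν) such that for all Δ ≥ Δ₀(δ,ν): if G is a finite simple graph with maximum degree at most Δ and L is a list assignment of E(G) such that (i) |L(e)| ≥ ν·Δ for all e ∈ E(G), and (ii) the vector x = (1/|L(e)| : e ∈ E(G)) is an element of (1−δ)·MP(G), then G is L-edge-colourable. -/

import Mathlib

open scoped Pointwise

/-- An `L`-edge-colouring of a simple graph `G`. -/
def IsLEdgeColouring {V : Type} (G : SimpleGraph V) (L : Sym2 V → Finset ℕ)
    (γ : Sym2 V → ℕ) : Prop :=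
  (∀ e ∈ G.edgeSet, γ e ∈ L e) ∧
  ∀ e ∈ G.edgeSet, ∀ f ∈ G.edgeSet, e ≠ f → (∃ v, v ∈ e ∧ v ∈ f) → γ e ≠ γ f

/-- `M` is a matching of `G`: a set of edges of `G`, pairwise sharing no vertex. -/
def IsMatchingFinset {V : Type} [Fintype V] [DecidableEq V] (G : SimpleGraph V)
    [DecidableRel G.Adj] (M : Finset (Sym2 V)) : Prop :=
  M ⊆ G.edgeFinset ∧ ∀ e ∈ M, ∀ f ∈ M, e ≠ f → ∀ v : V, ¬(v ∈ e ∧ v ∈ f)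

/-- The matching polytope of `G`: the convex hull in `ℝ^{E(G)}` of the characteristic
vectors of the matchings of `G`. -/
noncomputable def matchingPolytope {V : Type} [Fintype V] [DecidableEq V]
    (G : SimpleGraph V) [DecidableRel G.Adj] : Set (G.edgeFinset → ℝ) :=
  convexHull ℝ {x | ∃ M : Finset (Sym2 V), IsMatchingFinset G M ∧
    x = fun e : G.edgeFinset => if (e : Sym2 V) ∈ M then (1 : ℝ) else 0}

/-!
The proof is Kahn's semi-random colouring. Give every edge `e` a weight `w e c` on colours,
initially uniform on a list cut down to a size proportional to `Δ`; membership in `(1 - δ) • MP(G)`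
bounds the load of each colour at each vertex, the total weight of that colour on the edges at the
vertex, by `1 - δ`. In one round every colour `c` is activated at every edge `e` independently with
probability `θ * w e c`. An edge is coloured by a colour activated at it and at no other edge
meeting it; an uncoloured edge forgets the colours activated around it, and its other weights are
divided by the probability of having survived, so that total weights keep their expectation. The
loads shrink: the rescaling raises a load `r` by a factor of about `1 / (1 - θ * r)`, while the
coloured edges leave and lower it by a factor of about `1 - θ`. Bounded differences make total
weights and loads concentrate exponentially in `Δ`, and since the outcome near a vertex only depends
on the choices at nearby edges, the local lemma yields an outcome that is good everywhere. After
finitely many rounds all loads are at most `1 / 32`, and then choosing every colour at random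
according to the weights succeeds by the local lemma.
-/

namespace EdgeNibble

section ProductExpectation

variable {ι : Type*} {A : ι → Type*}

lemma dependsOn_indicator_one {E : Set (∀ i, A i)} {S : Set ι} (hE : DependsOn (· ∈ E) S) :
    DependsOn (E.indicator (1 : (∀ i, A i) → ℝ)) S := by
  classical
  intro ω ω' hω
  simp only [Set.indicator_apply, show (ω ∈ E) = (ω' ∈ E) from hE hω, Pi.one_apply]

lemma apply_update_of_dependsOn [DecidableEq ι] {β : Type*} {f : (∀ i, A i) → β} {S : Set ι}
    (hf : DependsOn f S) {i : ι} (hi : i ∉ S) (ω : ∀ i, A i) (a : A i) :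
    f (Function.update ω i a) = f ω :=
  hf fun _ hj => Function.update_of_ne (ne_of_mem_of_not_mem hj hi) ..

/-- The conditional expectation of `f` given all coordinates except the `i`-th. -/
def average [DecidableEq ι] [∀ i, Fintype (A i)] (μ : ∀ i, A i → ℝ) (i : ι)
    (f : (∀ i, A i) → ℝ) (ω : ∀ i, A i) : ℝ :=
  ∑ a, μ i a * f (Function.update ω i a)

lemma dependsOn_average [DecidableEq ι] [∀ i, Fintype (A i)] {μ : ∀ i, A i → ℝ}
    {f : (∀ i, A i) → ℝ} {i : ι} {S : Set ι}
    (hf : DependsOn f (insert i S)) : DependsOn (average μ i f) S := by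
  intro ω ω' hω
  refine Finset.sum_congr rfl fun a _ => ?_
  congr 1
  refine hf fun j hj => ?_
  obtain rfl | hji := eq_or_ne j i
  · simp
  · simpa [hji] using hω j (hj.resolve_left hji)

variable [Fintype ι]

/-- The mass of the point `ω` under the product of the mass functions `μ i`. -/
def productMass (μ : ∀ i, A i → ℝ) (ω : ∀ i, A i) : ℝ := ∏ i, μ i (ω i)

lemma productMass_nonneg {μ : ∀ i, A i → ℝ} (hμ : ∀ i a, 0 ≤ μ i a) (ω : ∀ i, A i) :
    0 ≤ productMass μ ω :=
  Finset.prod_nonneg fun i _ => hμ i _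

lemma productMass_update_mul [DecidableEq ι] (μ : ∀ i, A i → ℝ) (i : ι) (ω : ∀ i, A i) (a : A i) :
    productMass μ (Function.update ω i a) * μ i (ω i) = productMass μ ω * μ i a := by
  have other_factors : ∏ j ∈ Finset.univ.erase i, μ j (Function.update ω i a j)
      = ∏ j ∈ Finset.univ.erase i, μ j (ω j) :=
    Finset.prod_congr rfl fun j hj => by rw [Function.update_of_ne (Finset.ne_of_mem_erase hj)]
  rw [productMass, productMass, ← Finset.mul_prod_erase Finset.univ _ (Finset.mem_univ i),
    ← Finset.mul_prod_erase Finset.univ (fun j => μ j (ω j)) (Finset.mem_univ i), other_factors,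
    Function.update_self]
  ring

variable [DecidableEq ι] [∀ i, Fintype (A i)]

/-- The expectation of `f` under the product of the mass functions `μ i`. -/
def expect (μ : ∀ i, A i → ℝ) (f : (∀ i, A i) → ℝ) : ℝ := ∑ ω, productMass μ ω * f ω

/-- The probability of the event `E` under the product of the mass functions `μ i`. -/
noncomputable def prob (μ : ∀ i, A i → ℝ) (E : Set (∀ i, A i)) : ℝ := expect μ (E.indicator 1)

variable {μ : ∀ i, A i → ℝ}

lemma expect_sub (f g : (∀ i, A i) → ℝ) :
    expect μ (fun ω => f ω - g ω) = expect μ f - expect μ g := by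
  simp only [expect, mul_sub, Finset.sum_sub_distrib]

lemma expect_const_mul (c : ℝ) (f : (∀ i, A i) → ℝ) :
    expect μ (fun ω => c * f ω) = c * expect μ f := by
  simp only [expect, Finset.mul_sum, mul_left_comm]

lemma expect_sum {κ : Type*} (s : Finset κ) (f : κ → (∀ i, A i) → ℝ) :
    expect μ (fun ω => ∑ k ∈ s, f k ω) = ∑ k ∈ s, expect μ (f k) := by
  simp only [expect, Finset.mul_sum]
  exact Finset.sum_comm

lemma expect_const (hμ : ∀ i, μ i ∈ stdSimplex ℝ (A i)) (c : ℝ) :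
    expect μ (fun _ => c) = c := by
  simp only [expect, productMass, ← Finset.sum_mul]
  rw [← Fintype.piFinset_univ, ← Finset.prod_univ_sum]
  simp [(hμ _).2]

lemma expect_mono (hμ : ∀ i, μ i ∈ stdSimplex ℝ (A i)) {f g : (∀ i, A i) → ℝ}
    (hfg : ∀ ω, f ω ≤ g ω) : expect μ f ≤ expect μ g :=
  Finset.sum_le_sum fun ω _ =>
    mul_le_mul_of_nonneg_left (hfg ω) (productMass_nonneg (fun i => (hμ i).1) ω)

lemma expect_nonneg (hμ : ∀ i, μ i ∈ stdSimplex ℝ (A i)) {f : (∀ i, A i) → ℝ}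
    (hf : ∀ ω, 0 ≤ f ω) : 0 ≤ expect μ f :=
  Finset.sum_nonneg fun ω _ => mul_nonneg (productMass_nonneg (fun i => (hμ i).1) ω) (hf ω)

lemma prob_nonneg (hμ : ∀ i, μ i ∈ stdSimplex ℝ (A i)) (E : Set (∀ i, A i)) : 0 ≤ prob μ E :=
  expect_nonneg hμ fun _ => Set.indicator_nonneg (fun _ _ => zero_le_one) _

lemma prob_univ (hμ : ∀ i, μ i ∈ stdSimplex ℝ (A i)) : prob μ Set.univ = 1 := by
  rw [prob, Set.indicator_univ]
  exact expect_const hμ 1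

lemma prob_mono (hμ : ∀ i, μ i ∈ stdSimplex ℝ (A i)) {E F : Set (∀ i, A i)} (h : E ⊆ F) :
    prob μ E ≤ prob μ F :=
  expect_mono hμ fun _ => Set.indicator_le_indicator_of_subset h (fun _ => zero_le_one) _

lemma prob_biUnion_le (hμ : ∀ i, μ i ∈ stdSimplex ℝ (A i)) {κ : Type*} (s : Finset κ)
    (E : κ → Set (∀ i, A i)) : prob μ (⋃ k ∈ s, E k) ≤ ∑ k ∈ s, prob μ (E k) := by
  have indicator_nonneg (k : κ) (ω : ∀ i, A i) : 0 ≤ ((E k).indicator 1 ω : ℝ) :=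
    Set.indicator_nonneg (fun _ _ => zero_le_one) _
  simp only [prob, ← expect_sum]
  refine expect_mono hμ fun ω => Set.indicator_apply_le' (fun hω => ?_) fun _ => ?_
  · obtain ⟨k, hk, hωk⟩ := Set.mem_iUnion₂.mp hω
    calc (1 : ℝ) = (E k).indicator 1 ω := by simp [hωk]
      _ ≤ _ := Finset.single_le_sum (f := fun k => ((E k).indicator 1 ω : ℝ))
        (fun k _ => indicator_nonneg k ω) hk
  · exact Finset.sum_nonneg fun k _ => indicator_nonneg k ω

lemma prob_union_le (hμ : ∀ i, μ i ∈ stdSimplex ℝ (A i)) (E F : Set (∀ i, A i)) :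
    prob μ (E ∪ F) ≤ prob μ E + prob μ F := by
  simpa [Set.union_eq_iUnion, add_comm] using
    prob_biUnion_le hμ Finset.univ fun b : Bool => cond b E F

-- Resampling the `i`-th coordinate is an involution on pairs (point, new value) that preserves
-- their joint mass.
lemma expect_average (hμ : ∀ i, μ i ∈ stdSimplex ℝ (A i)) (i : ι) (f : (∀ i, A i) → ℝ) :
    expect μ (average μ i f) = expect μ f := by
  calc expect μ (average μ i f)
      = ∑ x : (∀ i, A i) × A i, productMass μ x.1 * μ i x.2 * f (Function.update x.1 i x.2) := by
        simp only [Fintype.sum_prod_type, expect, average, Finset.mul_sum, mul_assoc]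
    _ = ∑ x : (∀ i, A i) × A i, productMass μ x.1 * μ i x.2 * f x.1 := by
        refine Finset.sum_bij' (fun x _ => (Function.update x.1 i x.2, x.1 i))
          (fun x _ => (Function.update x.1 i x.2, x.1 i)) (by simp) (by simp) (by simp) (by simp)
          fun x _ => ?_
        rw [productMass_update_mul]
    _ = expect μ f := by
        simp only [Fintype.sum_prod_type, expect, ← Finset.sum_mul, ← Finset.mul_sum, (hμ i).2,
          mul_one]

theorem expect_mul_of_dependsOn (hμ : ∀ i, μ i ∈ stdSimplex ℝ (A i)) {S T : Set ι}
    {f g : (∀ i, A i) → ℝ} (hf : DependsOn f S) (hg : DependsOn g T) (hST : Disjoint S T) :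
    expect μ (fun ω => f ω * g ω) = expect μ f * expect μ g := by
  induction S, S.toFinite using Set.Finite.induction_on generalizing f with
  | empty =>
    rcases isEmpty_or_nonempty (∀ i, A i) with _ | ⟨⟨ω₀⟩⟩
    · simp [expect]
    · have f_const : f = fun _ => f ω₀ := funext fun ω => hf.empty ω ω₀
      rw [f_const, expect_const hμ, expect_const_mul]
  | @insert i S _ _ ih =>
    have hiT : i ∉ T := Set.disjoint_left.mp hST (Set.mem_insert i S)
    have average_mul : average μ i (fun ω => f ω * g ω) = fun ω => average μ i f ω * g ω := by
      funext ω
      simp only [average, Finset.sum_mul, apply_update_of_dependsOn hg hiT, mul_assoc]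
    rw [← expect_average hμ i, ← expect_average hμ i f, average_mul,
      ih (dependsOn_average hf) (hST.mono_left (Set.subset_insert i S))]

theorem expect_prod_of_dependsOn (hμ : ∀ i, μ i ∈ stdSimplex ℝ (A i)) {κ : Type*}
    (s : Finset κ) {T : κ → Set ι} {f : κ → (∀ i, A i) → ℝ}
    (hf : ∀ k ∈ s, DependsOn (f k) (T k)) (hT : (s : Set κ).PairwiseDisjoint T) :
    expect μ (fun ω => ∏ k ∈ s, f k ω) = ∏ k ∈ s, expect μ (f k) := by
  classical
  induction s using Finset.induction_on with
  | empty => simp [expect_const hμ]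
  | insert k s hk ih =>
    have rest_dependsOn : DependsOn (fun ω => ∏ l ∈ s, f l ω) (⋃ l ∈ s, T l) :=
      fun ω ω' hω => Finset.prod_congr rfl fun l hl =>
        hf l (Finset.mem_insert_of_mem hl) fun i hi => hω i (Set.mem_biUnion hl hi)
    have rest_disjoint : Disjoint (T k) (⋃ l ∈ s, T l) :=
      Set.disjoint_iUnion₂_right.mpr fun l hl => hT (Finset.mem_insert_self k s)
        (Finset.mem_insert_of_mem hl) (by rintro rfl; exact hk hl)
    simp only [Finset.prod_insert hk]
    rw [expect_mul_of_dependsOn hμ (hf k (Finset.mem_insert_self k s)) rest_dependsOn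
        rest_disjoint,
      ih (fun l hl => hf l (Finset.mem_insert_of_mem hl))
        (hT.subset (by exact_mod_cast Finset.subset_insert k s))]

lemma prob_apply_eq (hμ : ∀ i, μ i ∈ stdSimplex ℝ (A i)) (i : ι) (a : A i) :
    prob μ {ω | ω i = a} = μ i a := by
  classical
  have average_eq : average μ i ({ω | ω i = a}.indicator 1) = fun _ => μ i a := by
    funext ω
    simp [average, Set.indicator_apply]
  rw [prob, ← expect_average hμ i, average_eq, expect_const hμ]

lemma prob_forall_mem_apply_eq (hμ : ∀ i, μ i ∈ stdSimplex ℝ (A i)) (S : Finset ι)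
    (x : ∀ i, A i) : prob μ {ω | ∀ i ∈ S, ω i = x i} = ∏ i ∈ S, μ i (x i) := by
  classical
  have indicator_eq : {ω : ∀ i, A i | ∀ i ∈ S, ω i = x i}.indicator (1 : (∀ i, A i) → ℝ)
      = fun ω => ∏ i ∈ S, {ω : ∀ i, A i | ω i = x i}.indicator 1 ω := by
    funext ω
    simp [Set.indicator_apply, Finset.prod_ite_zero]
  rw [prob, indicator_eq, expect_prod_of_dependsOn hμ S (T := fun i => {i})]
  · exact Finset.prod_congr rfl fun i _ => prob_apply_eq hμ i (x i)
  · exact fun i _ => dependsOn_indicator_one fun ω ω' hω => by simp [hω i rfl]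
  · exact fun i _ j _ hij => Set.disjoint_singleton.mpr hij

lemma prob_lt_le_exp_mul_expect_exp (hμ : ∀ i, μ i ∈ stdSimplex ℝ (A i)) (f : (∀ i, A i) → ℝ)
    {t : ℝ} (ht : 0 ≤ t) (a : ℝ) :
    prob μ {ω | a < f ω} ≤ Real.exp (-t * a) * expect μ (fun ω => Real.exp (t * f ω)) := by
  rw [prob, ← expect_const_mul]
  refine expect_mono hμ fun ω => ?_
  rw [← Real.exp_add]
  refine Set.indicator_apply_le' (fun hω => Real.one_le_exp ?_) fun _ => (Real.exp_pos _).le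
  nlinarith [show a < f ω from hω]

end ProductExpectation

section LocalLemma

variable {ι : Type*} {A : ι → Type*} {J : Type*}

/-- The event that none of the events `E j` with `j ∈ s` occurs. -/
def avoiding (E : J → Set (∀ i, A i)) (s : Finset J) : Set (∀ i, A i) :=
  {ω | ∀ j ∈ s, ω ∉ E j}

variable [Fintype ι] [DecidableEq ι] [∀ i, Fintype (A i)] {μ : ∀ i, A i → ℝ}
  {E : J → Set (∀ i, A i)} {S : J → Finset ι}

lemma prob_inter_avoiding_le_mul (hμ : ∀ i, μ i ∈ stdSimplex ℝ (A i))
    (hE : ∀ j, DependsOn (· ∈ E j) (S j)) (j : J) (s : Finset J) :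
    prob μ (E j ∩ avoiding E s)
      ≤ prob μ (E j) * prob μ (avoiding E {k ∈ s | Disjoint (S j) (S k)}) := by
  set far := {k ∈ s | Disjoint (S j) (S k)}
  have far_dependsOn : DependsOn (· ∈ avoiding E far) (⋃ k ∈ far, (S k : Set ι)) :=
    fun ω ω' hω => eq_iff_iff.mpr <| forall₂_congr fun k hk => not_congr <|
      Eq.to_iff (hE k fun i hi => hω i (Set.mem_biUnion hk hi))
  have far_disjoint : Disjoint (S j : Set ι) (⋃ k ∈ far, (S k : Set ι)) :=
    Set.disjoint_iUnion₂_right.mpr fun k hk =>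
      Finset.disjoint_coe.mpr (Finset.mem_filter.mp hk).2
  calc prob μ (E j ∩ avoiding E s) ≤ prob μ (E j ∩ avoiding E far) :=
        prob_mono hμ <| Set.inter_subset_inter_right _
          fun ω hω k hk => hω k (Finset.mem_filter.mp hk).1
    _ = prob μ (E j) * prob μ (avoiding E far) := by
        rw [prob, Set.inter_indicator_one]
        exact expect_mul_of_dependsOn hμ (dependsOn_indicator_one (hE j))
          (dependsOn_indicator_one far_dependsOn) far_disjoint

lemma prob_avoiding_le_add [DecidableEq J] (hμ : ∀ i, μ i ∈ stdSimplex ℝ (A i))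
    (s t : Finset J) :
    prob μ (avoiding E t)
      ≤ prob μ (avoiding E s) + ∑ k ∈ s \ t, prob μ (E k ∩ avoiding E t) := by
  have cover : avoiding E t ⊆ avoiding E s ∪ ⋃ k ∈ s \ t, E k ∩ avoiding E t := by
    intro ω hω
    by_cases hs : ω ∈ avoiding E s
    · exact Or.inl hs
    · obtain ⟨k, hks, hk⟩ : ∃ k ∈ s, ω ∈ E k := by simpa [avoiding] using hs
      have hkt : k ∉ t := fun hkt => hω k hkt hk
      exact Or.inr (Set.mem_biUnion (Finset.mem_sdiff.mpr ⟨hks, hkt⟩) ⟨hk, hω⟩)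
  calc prob μ (avoiding E t)
      ≤ prob μ (avoiding E s) + prob μ (⋃ k ∈ s \ t, E k ∩ avoiding E t) :=
        (prob_mono hμ cover).trans (prob_union_le hμ _ _)
    _ ≤ _ := add_le_add_right (prob_biUnion_le hμ _ _) _

variable [Fintype J]

lemma prob_inter_avoiding_le_two_mul (hμ : ∀ i, μ i ∈ stdSimplex ℝ (A i))
    (hE : ∀ j, DependsOn (· ∈ E j) (S j))
    (hsum : ∀ j, ∑ k with ¬ Disjoint (S j) (S k), prob μ (E k) ≤ 1 / 4) (s : Finset J) (j : J) :
    prob μ (E j ∩ avoiding E s) ≤ 2 * prob μ (E j) * prob μ (avoiding E s) := by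
  classical
  induction s using Finset.strongInduction generalizing j with
  | H s ih =>
  set far := {k ∈ s | Disjoint (S j) (S k)} with hfar
  have far_le : prob μ (avoiding E far) ≤ 2 * prob μ (avoiding E s) := by
    obtain far_eq | far_ssubset := (Finset.filter_subset _ s : far ⊆ s).eq_or_ssubset
    · rw [show far = s from far_eq]
      linarith [prob_nonneg hμ (avoiding E s)]
    · have near_le : ∑ k ∈ s \ far, prob μ (E k) ≤ 1 / 4 := by
        refine (Finset.sum_le_sum_of_subset_of_nonneg (fun k hk => ?_)
          fun k _ _ => prob_nonneg hμ _).trans (hsum j)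
        simp only [hfar, Finset.mem_sdiff, Finset.mem_filter, not_and] at hk
        exact Finset.mem_filter.mpr ⟨Finset.mem_univ k, hk.2 hk.1⟩
      have near_inter_le : ∑ k ∈ s \ far, prob μ (E k ∩ avoiding E far)
          ≤ 1 / 4 * (2 * prob μ (avoiding E far)) := calc
        _ ≤ ∑ k ∈ s \ far, prob μ (E k) * (2 * prob μ (avoiding E far)) :=
          Finset.sum_le_sum fun k _ => (ih far far_ssubset k).trans_eq (by ring)
        _ = (∑ k ∈ s \ far, prob μ (E k)) * (2 * prob μ (avoiding E far)) :=
          (Finset.sum_mul ..).symm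
        _ ≤ _ := mul_le_mul_of_nonneg_right near_le
          (mul_nonneg zero_le_two (prob_nonneg hμ _))
      linarith [prob_avoiding_le_add (E := E) hμ s far]
  calc prob μ (E j ∩ avoiding E s) ≤ prob μ (E j) * prob μ (avoiding E far) :=
        prob_inter_avoiding_le_mul hμ hE j s
    _ ≤ prob μ (E j) * (2 * prob μ (avoiding E s)) :=
        mul_le_mul_of_nonneg_left far_le (prob_nonneg hμ _)
    _ = _ := by ring

lemma prob_avoiding_pos (hμ : ∀ i, μ i ∈ stdSimplex ℝ (A i))
    (hE : ∀ j, DependsOn (· ∈ E j) (S j))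
    (hsum : ∀ j, ∑ k with ¬ Disjoint (S j) (S k), prob μ (E k) ≤ 1 / 4)
    (hle : ∀ j, prob μ (E j) ≤ 1 / 4) (s : Finset J) : 0 < prob μ (avoiding E s) := by
  classical
  induction s using Finset.induction_on with
  | empty => simp [avoiding, prob_univ hμ]
  | insert k s hk ih =>
    have add_le := prob_avoiding_le_add (E := E) hμ (insert k s) s
    rw [Finset.insert_sdiff_cancel hk, Finset.sum_singleton] at add_le
    have inter_le := prob_inter_avoiding_le_two_mul hμ hE hsum s k
    have := mul_le_mul_of_nonneg_right (hle k) ih.le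
    linarith

theorem lovasz_local_lemma (hμ : ∀ i, μ i ∈ stdSimplex ℝ (A i))
    (hE : ∀ j, DependsOn (· ∈ E j) (S j))
    (hsum : ∀ j, ∑ k with ¬ Disjoint (S j) (S k), prob μ (E k) ≤ 1 / 4)
    (hle : ∀ j, prob μ (E j) ≤ 1 / 4) :
    ∃ ω, (∀ i, μ i (ω i) ≠ 0) ∧ ∀ j, ω ∉ E j := by
  have pos := prob_avoiding_pos hμ hE hsum hle Finset.univ
  obtain ⟨ω, -, hω⟩ := Finset.exists_ne_zero_of_sum_ne_zero pos.ne'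
  have mem : ω ∈ avoiding E Finset.univ := Set.mem_of_indicator_ne_zero (right_ne_zero_of_mul hω)
  exact ⟨ω, fun i => Finset.prod_ne_zero_iff.mp (left_ne_zero_of_mul hω) i (Finset.mem_univ i),
    fun j => mem j (Finset.mem_univ j)⟩

end LocalLemma

section Concentration

/-- The Bernoulli mass functions on `Bool` with success probabilities `p i`. -/
def bernoulliMass {ι : Type*} (p : ι → ℝ) (i : ι) (b : Bool) : ℝ := if b then p i else 1 - p i

lemma bernoulliMass_mem_stdSimplex {ι : Type*} {p : ι → ℝ} (hp : ∀ i, p i ∈ Set.Icc 0 1)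
    (i : ι) : bernoulliMass p i ∈ stdSimplex ℝ Bool := by
  refine ⟨fun b => ?_, by simp [bernoulliMass]⟩
  cases b <;> simp [bernoulliMass, (hp i).1, (hp i).2]

lemma exp_le_one_add_add_sq {d : ℝ} (hd : |d| ≤ 1) : Real.exp d ≤ 1 + d + d ^ 2 := by
  linarith [(abs_le.mp (Real.abs_exp_sub_one_sub_id_le hd)).2]

lemma bernoulli_exp_le {q x y c t : ℝ} (hq : 0 ≤ q) (hc : |y - x| ≤ c) (ht : |t| * c ≤ 1) :
    (1 - q) * Real.exp (t * x) + q * Real.exp (t * y)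
      ≤ Real.exp (t * ((1 - q) * x + q * y) + t ^ 2 * (q * c ^ 2)) := by
  set d := t * (y - x) with hd
  have abs_d_le : |d| ≤ |t| * c := by
    rw [hd, abs_mul]
    exact mul_le_mul_of_nonneg_left hc (abs_nonneg t)
  have sq_d_le : d ^ 2 ≤ t ^ 2 * c ^ 2 := by
    rw [← sq_abs d, ← sq_abs t, ← mul_pow]
    exact pow_le_pow_left₀ (abs_nonneg d) abs_d_le 2
  calc (1 - q) * Real.exp (t * x) + q * Real.exp (t * y)
      = Real.exp (t * x) * (1 - q + q * Real.exp d) := by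
        rw [show t * y = t * x + d by rw [hd]; ring, Real.exp_add]
        ring
    _ ≤ Real.exp (t * x) * (1 - q + q * (1 + d + d ^ 2)) := by
        gcongr
        exact exp_le_one_add_add_sq (abs_d_le.trans ht)
    _ ≤ Real.exp (t * x) * (q * d + q * (t ^ 2 * c ^ 2) + 1) := by
        refine mul_le_mul_of_nonneg_left ?_ (Real.exp_pos _).le
        nlinarith [mul_le_mul_of_nonneg_left sq_d_le hq]
    _ ≤ Real.exp (t * x) * Real.exp (q * d + q * (t ^ 2 * c ^ 2)) := by
        gcongr
        exact Real.add_one_le_exp _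
    _ = _ := by
        rw [← Real.exp_add, hd]
        ring_nf

variable {ι : Type*} [DecidableEq ι] {p : ι → ℝ}

lemma average_bernoulliMass (i : ι) (f : (ι → Bool) → ℝ) (ω : ι → Bool) :
    average (bernoulliMass p) i f ω
      = (1 - p i) * f (Function.update ω i false) + p i * f (Function.update ω i true) := by
  simp [average, bernoulliMass, add_comm]

lemma abs_average_update_sub_le (hp : ∀ i, p i ∈ Set.Icc 0 1) {f : (ι → Bool) → ℝ} {i j : ι}
    (hji : j ≠ i) {c : ℝ}
    (hf : ∀ ω, |f (Function.update ω j true) - f (Function.update ω j false)| ≤ c)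
    (ω : ι → Bool) :
    |average (bernoulliMass p) i f (Function.update ω j true)
      - average (bernoulliMass p) i f (Function.update ω j false)| ≤ c := by
  simp only [average_bernoulliMass, Function.update_comm hji]
  have hfalse := hf (Function.update ω i false)
  have htrue := hf (Function.update ω i true)
  have := (hp i).1
  have := (hp i).2
  rw [abs_le] at hfalse htrue ⊢
  constructor <;> nlinarith

variable [Fintype ι]

theorem expect_exp_le_of_bounded_differences (hp : ∀ i, p i ∈ Set.Icc 0 1) {c : ι → ℝ} {t : ℝ}
    {S : Finset ι} {f : (ι → Bool) → ℝ} (hf : DependsOn f S) (ht : ∀ i ∈ S, |t| * c i ≤ 1)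
    (hc : ∀ i ∈ S, ∀ ω, |f (Function.update ω i true) - f (Function.update ω i false)| ≤ c i) :
    expect (bernoulliMass p) (fun ω => Real.exp (t * f ω))
      ≤ Real.exp (t * expect (bernoulliMass p) f + t ^ 2 * ∑ i ∈ S, p i * c i ^ 2) := by
  have hμ := bernoulliMass_mem_stdSimplex hp
  induction S using Finset.induction_on generalizing f with
  | empty =>
    have f_const : f = fun _ => f fun _ => false := funext fun ω => hf fun i hi => by simp at hi
    rw [f_const]
    simp [expect_const hμ]
  | insert i S hi ih =>
    have averaged := ih (f := average (bernoulliMass p) i f)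
      (dependsOn_average (by simpa using hf)) (fun j hj => ht j (Finset.mem_insert_of_mem hj))
      fun j hj => abs_average_update_sub_le hp (ne_of_mem_of_not_mem hj hi)
        (hc j (Finset.mem_insert_of_mem hj))
    have one_coordinate (ω : ι → Bool) :
        average (bernoulliMass p) i (fun ω => Real.exp (t * f ω)) ω
          ≤ Real.exp (t ^ 2 * (p i * c i ^ 2))
            * Real.exp (t * average (bernoulliMass p) i f ω) := by
      rw [← Real.exp_add, add_comm, average_bernoulliMass, average_bernoulliMass]
      exact bernoulli_exp_le (hp i).1 (hc i (Finset.mem_insert_self i S) ω)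
        (ht i (Finset.mem_insert_self i S))
    rw [expect_average hμ] at averaged
    calc expect (bernoulliMass p) (fun ω => Real.exp (t * f ω))
        ≤ Real.exp (t ^ 2 * (p i * c i ^ 2)) * expect (bernoulliMass p)
            (fun ω => Real.exp (t * average (bernoulliMass p) i f ω)) := by
          rw [← expect_average hμ i, ← expect_const_mul]
          exact expect_mono hμ one_coordinate
      _ ≤ _ := mul_le_mul_of_nonneg_left averaged (Real.exp_nonneg _)
      _ = _ := by
          rw [← Real.exp_add, Finset.sum_insert hi]
          ring_nf

theorem prob_lt_sub_le_exp_of_bounded_differences (hp : ∀ i, p i ∈ Set.Icc 0 1) {c : ι → ℝ}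
    {t m ε s : ℝ} {S : Finset ι} {f : (ι → Bool) → ℝ} (hf : DependsOn f S) (ht : 0 ≤ t)
    (htc : ∀ i ∈ S, t * c i ≤ 1)
    (hc : ∀ i ∈ S, ∀ ω, |f (Function.update ω i true) - f (Function.update ω i false)| ≤ c i)
    (hm : m ≤ expect (bernoulliMass p) f) (hs : ∑ i ∈ S, p i * c i ^ 2 ≤ s) :
    prob (bernoulliMass p) {ω | f ω < m - ε} ≤ Real.exp (-t * ε + t ^ 2 * s) := by
  have mgf_le := expect_exp_le_of_bounded_differences hp (t := -t) hf
    (by simpa only [abs_neg, abs_of_nonneg ht] using htc) hc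
  calc prob (bernoulliMass p) {ω | f ω < m - ε}
      = prob (bernoulliMass p) {ω | -(m - ε) < -f ω} := by simp only [neg_lt_neg_iff]
    _ ≤ Real.exp (-t * -(m - ε)) * expect (bernoulliMass p) (fun ω => Real.exp (t * -f ω)) :=
        prob_lt_le_exp_mul_expect_exp (bernoulliMass_mem_stdSimplex hp) _ ht _
    _ ≤ Real.exp (-t * -(m - ε)) * Real.exp (-t * expect (bernoulliMass p) f
          + (-t) ^ 2 * ∑ i ∈ S, p i * c i ^ 2) := by
        simp only [← neg_mul_comm t]
        gcongr
    _ ≤ Real.exp (-t * ε + t ^ 2 * s) := by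
        rw [← Real.exp_add, Real.exp_le_exp, neg_sq]
        nlinarith [mul_le_mul_of_nonneg_left hm ht, mul_le_mul_of_nonneg_left hs (sq_nonneg t)]

end Concentration

section IndicatorSums

lemma one_add_mul_exp_sub_one_le {q x : ℝ} (hq : q ∈ Set.Icc 0 1) (hx : x ∈ Set.Icc 0 1) :
    1 + q * (Real.exp x - 1) ≤ Real.exp (x ^ 2 + q * x) := by
  have exp_le := exp_le_one_add_add_sq (d := x) (by rw [abs_of_nonneg hx.1]; exact hx.2)
  calc 1 + q * (Real.exp x - 1) ≤ 1 + q * (x + x ^ 2) := by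
        gcongr
        exacts [hq.1, by linarith]
    _ ≤ x ^ 2 + q * x + 1 := by nlinarith [sq_nonneg x, hq.2]
    _ ≤ _ := Real.add_one_le_exp _

lemma exp_mul_sum_mul_indicator {Ω κ : Type*} (N : Finset κ) (b : κ → ℝ) (X : κ → Set Ω)
    (t : ℝ) (ω : Ω) :
    Real.exp (t * ∑ u ∈ N, b u * (X u).indicator 1 ω)
      = ∑ S ∈ N.powerset,
          (∏ u ∈ S, (Real.exp (t * b u) - 1)) * ∏ u ∈ S, (X u).indicator 1 ω := by
  rw [Finset.mul_sum, Real.exp_sum]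
  simp only [← Finset.prod_mul_distrib]
  rw [← Finset.prod_one_add]
  refine Finset.prod_congr rfl fun u _ => ?_
  by_cases hω : ω ∈ X u <;> simp [hω]

variable {ι : Type*} {A : ι → Type*} [Fintype ι] [DecidableEq ι] [∀ i, Fintype (A i)]
  {μ : ∀ i, A i → ℝ}

variable {κ : Type*} {N : Finset κ} {b : κ → (∀ i, A i) → ℝ} {X : κ → Set (∀ i, A i)}
  {β q t : ℝ}

-- Expanding the exponential over subsets of `N` only involves the joint probabilities of the
-- events `X u`, so these may be replaced by independent events of probability `q`.
lemma expect_exp_sum_mul_indicator_le (hμ : ∀ i, μ i ∈ stdSimplex ℝ (A i)) {T T' : Set ι}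
    (hT : Disjoint T T') (hb : ∀ u ∈ N, DependsOn (b u) T)
    (hX : ∀ u ∈ N, DependsOn (· ∈ X u) T') (hb0 : ∀ u ∈ N, ∀ ω, 0 ≤ b u ω) (ht : 0 ≤ t)
    (hq : ∀ S ⊆ N, expect μ (fun ω => ∏ u ∈ S, (X u).indicator 1 ω) ≤ q ^ S.card) :
    expect μ (fun ω => Real.exp (t * ∑ u ∈ N, b u ω * (X u).indicator 1 ω))
      ≤ expect μ (fun ω => ∏ u ∈ N, (1 + q * (Real.exp (t * b u ω) - 1))) := by
  have indep (S : Finset κ) (hS : S ⊆ N) :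
      expect μ (fun ω =>
          (∏ u ∈ S, (Real.exp (t * b u ω) - 1)) * ∏ u ∈ S, (X u).indicator 1 ω)
        = expect μ (fun ω => ∏ u ∈ S, (Real.exp (t * b u ω) - 1))
          * expect μ (fun ω => ∏ u ∈ S, (X u).indicator 1 ω) := by
    refine expect_mul_of_dependsOn hμ (S := T) (T := T') (fun ω ω' hω => ?_)
      (fun ω ω' hω => ?_) hT
    · exact Finset.prod_congr rfl fun u hu => by rw [hb u (hS hu) hω]
    · exact Finset.prod_congr rfl fun u hu => dependsOn_indicator_one (hX u (hS hu)) hω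
  have prod_nonneg (S : Finset κ) (hS : S ⊆ N) (ω : ∀ i, A i) :
      0 ≤ ∏ u ∈ S, (Real.exp (t * b u ω) - 1) := Finset.prod_nonneg fun u hu =>
    sub_nonneg.mpr (Real.one_le_exp (mul_nonneg ht (hb0 u (hS hu) ω)))
  calc expect μ (fun ω => Real.exp (t * ∑ u ∈ N, b u ω * (X u).indicator 1 ω))
      = ∑ S ∈ N.powerset, expect μ (fun ω => ∏ u ∈ S, (Real.exp (t * b u ω) - 1))
          * expect μ (fun ω => ∏ u ∈ S, (X u).indicator 1 ω) := by
        simp only [exp_mul_sum_mul_indicator, expect_sum]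
        exact Finset.sum_congr rfl fun S hS => indep S (Finset.mem_powerset.mp hS)
    _ ≤ ∑ S ∈ N.powerset,
          expect μ (fun ω => ∏ u ∈ S, (Real.exp (t * b u ω) - 1)) * q ^ S.card := by
        refine Finset.sum_le_sum fun S hS => ?_
        rw [Finset.mem_powerset] at hS
        exact mul_le_mul_of_nonneg_left (hq S hS) (expect_nonneg hμ (prod_nonneg S hS))
    _ = _ := by
        simp only [Finset.prod_one_add, Finset.prod_mul_distrib, Finset.prod_const, expect_sum,
          expect_const_mul]
        exact Finset.sum_congr rfl fun S _ => mul_comm ..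

theorem expect_exp_sum_mul_indicator_le_exp_mul (hμ : ∀ i, μ i ∈ stdSimplex ℝ (A i))
    {T T' : Set ι} (hT : Disjoint T T') (hb : ∀ u ∈ N, DependsOn (b u) T)
    (hX : ∀ u ∈ N, DependsOn (· ∈ X u) T') (hbβ : ∀ u ∈ N, ∀ ω, b u ω ∈ Set.Icc 0 β)
    (ht : 0 ≤ t) (htβ : t * β ≤ 1) (hq : q ∈ Set.Icc 0 1)
    (hXq : ∀ S ⊆ N, expect μ (fun ω => ∏ u ∈ S, (X u).indicator 1 ω) ≤ q ^ S.card) :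
    expect μ (fun ω => Real.exp (t * ∑ u ∈ N, b u ω * (X u).indicator 1 ω))
      ≤ Real.exp (t ^ 2 * (N.card * β ^ 2))
        * expect μ (fun ω => Real.exp (t * q * ∑ u ∈ N, b u ω)) := by
  refine (expect_exp_sum_mul_indicator_le hμ hT hb hX (fun u hu ω => (hbβ u hu ω).1) ht
    hXq).trans ?_
  rw [← expect_const_mul]
  refine expect_mono hμ fun ω => ?_
  have tb_nonneg (u : κ) (hu : u ∈ N) : 0 ≤ t * b u ω := mul_nonneg ht (hbβ u hu ω).1
  have tb_le (u : κ) (hu : u ∈ N) : t * b u ω ≤ t * β :=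
    mul_le_mul_of_nonneg_left (hbβ u hu ω).2 ht
  calc ∏ u ∈ N, (1 + q * (Real.exp (t * b u ω) - 1))
      ≤ ∏ u ∈ N, Real.exp ((t * b u ω) ^ 2 + q * (t * b u ω)) :=
        Finset.prod_le_prod
          (fun u hu => add_nonneg zero_le_one (mul_nonneg hq.1
            (sub_nonneg.mpr (Real.one_le_exp (tb_nonneg u hu)))))
          fun u hu => one_add_mul_exp_sub_one_le hq
            ⟨tb_nonneg u hu, (tb_le u hu).trans htβ⟩
    _ ≤ ∏ u ∈ N, Real.exp ((t * β) ^ 2 + q * (t * b u ω)) :=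
        Finset.prod_le_prod (fun _ _ => (Real.exp_pos _).le) fun u hu => by
          gcongr
          exacts [tb_nonneg u hu, (hbβ u hu ω).2]
    _ = _ := by
        rw [← Real.exp_sum, ← Real.exp_add, Finset.sum_add_distrib, Finset.sum_const,
          nsmul_eq_mul, Finset.mul_sum]
        congr 2
        · ring
        · exact Finset.sum_congr rfl fun u _ => by ring

end IndicatorSums

section ListColouring

variable {ι : Type*} [Fintype ι]

lemma sum_not_disjoint_pair_le [DecidableEq ι] {P : ι × ι → ℝ} {a : ℝ} (hP : ∀ k, 0 ≤ P k)
    (hrow : ∀ i, ∑ k, P (i, k) ≤ a) (hcol : ∀ i, ∑ k, P (k, i) ≤ a) (j : ι × ι) :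
    ∑ k with ¬ Disjoint ({j.1, j.2} : Finset ι) {k.1, k.2}, P k ≤ 4 * a := by
  have a_nonneg : 0 ≤ a := (Finset.sum_nonneg fun k _ => hP (j.1, k)).trans (hrow j.1)
  calc ∑ k with ¬ Disjoint ({j.1, j.2} : Finset ι) {k.1, k.2}, P k
      ≤ ∑ k, ∑ i ∈ {j.1, j.2}, ((if k.1 = i then P k else 0) + if k.2 = i then P k else 0) := by
        have term_nonneg (k : ι × ι) (i : ι) :
            0 ≤ (if k.1 = i then P k else 0) + if k.2 = i then P k else 0 := by
          have := hP k
          positivity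
        refine (Finset.sum_le_sum fun k hk => ?_).trans
          (Finset.sum_le_sum_of_subset_of_nonneg (Finset.filter_subset _ _)
            fun k _ _ => Finset.sum_nonneg fun i _ => term_nonneg k i)
        obtain ⟨i, hij, hik⟩ := Finset.not_disjoint_iff.mp (Finset.mem_filter.mp hk).2
        refine le_trans ?_ (Finset.single_le_sum (fun i _ => term_nonneg k i) hij)
        have := hP k
        obtain rfl | rfl : i = k.1 ∨ i = k.2 := by simpa using hik
        all_goals split_ifs <;> simp_all
    _ = ∑ i ∈ {j.1, j.2}, (∑ k, P (i, k) + ∑ k, P (k, i)) := by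
        rw [Finset.sum_comm]
        refine Finset.sum_congr rfl fun i _ => ?_
        rw [Finset.sum_add_distrib, Fintype.sum_prod_type_right, Fintype.sum_prod_type]
        simp
    _ ≤ ∑ _i ∈ {j.1, j.2}, (a + a) := Finset.sum_le_sum fun i _ => add_le_add (hrow i) (hcol i)
    _ ≤ 2 * (a + a) := by
        rw [Finset.sum_const, nsmul_eq_mul]
        gcongr
        exact_mod_cast Finset.card_le_two
    _ = 4 * a := by ring

variable {C : Type*} [Fintype C]

lemma prob_apply_eq_apply_le [DecidableEq ι] {p : ι → C → ℝ} (hp : ∀ i, p i ∈ stdSimplex ℝ C)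
    {i k : ι} (hik : i ≠ k) : prob p {γ | γ i = γ k} ≤ ∑ c, p i c * p k c := by
  have cover : {γ : ι → C | γ i = γ k}
      ⊆ ⋃ c ∈ Finset.univ, {γ : ι → C | ∀ l ∈ ({i, k} : Finset ι), γ l = c} := by
    intro γ hγ
    refine Set.mem_biUnion (Finset.mem_univ (γ k)) fun l hl => ?_
    obtain rfl | rfl : l = i ∨ l = k := by simpa using hl
    exacts [hγ, rfl]
  calc prob p {γ | γ i = γ k}
      ≤ ∑ c, prob p {γ : ι → C | ∀ l ∈ ({i, k} : Finset ι), γ l = c} :=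
        (prob_mono hp cover).trans (prob_biUnion_le hp _ _)
    _ = ∑ c, p i c * p k c := Finset.sum_congr rfl fun c _ => by
        rw [prob_forall_mem_apply_eq hp {i, k} fun _ => c, Finset.prod_pair hik]

theorem exists_coloring_of_sum_neighborFinset_le (H : SimpleGraph ι) [DecidableRel H.Adj]
    {p : ι → C → ℝ} (hp : ∀ i, p i ∈ stdSimplex ℝ C)
    (hsum : ∀ i c, ∑ k ∈ H.neighborFinset i, p k c ≤ 1 / 16) :
    ∃ γ : ι → C, (∀ i, p i (γ i) ≠ 0) ∧ ∀ i k, H.Adj i k → γ i ≠ γ k := by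
  classical
  let clash (j : ι × ι) : Set (ι → C) := {γ | H.Adj j.1 j.2 ∧ γ j.1 = γ j.2}
  have clash_swap (i k : ι) : clash (i, k) = clash (k, i) := by
    ext γ
    simp only [clash, Set.mem_ofPred_eq, H.adj_comm i k, eq_comm (a := γ i)]
  have prob_clash_le (i k : ι) :
      prob p (clash (i, k)) ≤ if H.Adj i k then ∑ c, p i c * p k c else 0 := by
    split_ifs with hik
    · exact (prob_mono hp fun γ hγ => hγ.2).trans (prob_apply_eq_apply_le hp hik.ne)
    · simp [clash, hik, prob, expect]
  have row_sum_le (i : ι) : ∑ k, prob p (clash (i, k)) ≤ 1 / 16 := calc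
    ∑ k, prob p (clash (i, k)) ≤ ∑ k, if H.Adj i k then ∑ c, p i c * p k c else 0 :=
      Finset.sum_le_sum fun k _ => prob_clash_le i k
    _ = ∑ c, p i c * ∑ k ∈ H.neighborFinset i, p k c := by
      simp only [Finset.mul_sum]
      rw [← Finset.sum_filter, ← H.neighborFinset_eq_filter, Finset.sum_comm]
    _ ≤ ∑ c, p i c * (1 / 16) :=
      Finset.sum_le_sum fun c _ => mul_le_mul_of_nonneg_left (hsum i c) ((hp i).1 c)
    _ = 1 / 16 := by rw [← Finset.sum_mul, (hp i).2, one_mul]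
  have clash_nonneg (j : ι × ι) : 0 ≤ prob p (clash j) := prob_nonneg hp _
  obtain ⟨γ, hγ, avoids⟩ := lovasz_local_lemma hp (E := clash) (S := fun j => {j.1, j.2})
    (fun j γ γ' h => by simp [clash, h j.1 (by simp), h j.2 (by simp)])
    (fun j => (sum_not_disjoint_pair_le clash_nonneg row_sum_le
      (fun i => by simpa only [clash_swap _ i] using row_sum_le i) j).trans (by norm_num))
    fun j => (Finset.single_le_sum (fun k _ => clash_nonneg (j.1, k)) (Finset.mem_univ j.2)).trans
      ((row_sum_le j.1).trans (by norm_num))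
  exact ⟨γ, hγ, fun i k hik h => avoids (i, k) ⟨hik, h⟩⟩

end ListColouring

section NibbleWeight

variable {V C : Type*} [Fintype V] [DecidableEq V]

/-- The edges of `F` at the vertex `v`. -/
def star (F : Finset (Sym2 V)) (v : V) : Finset (Sym2 V) := {e ∈ F | v ∈ e}

/-- The edges of `F` sharing a vertex with `e`, including `e` itself if it lies in `F`. -/
def touching (F : Finset (Sym2 V)) (e : Sym2 V) : Finset (Sym2 V) :=
  {f ∈ F | ∃ v ∈ e, v ∈ f}

lemma touching_mk (F : Finset (Sym2 V)) (a b : V) :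
    touching F s(a, b) = star F a ∪ star F b := by
  ext f
  simp [touching, star, and_or_left]

/-- The vertices joined to `v` by an edge of `F`. -/
def nbhd (F : Finset (Sym2 V)) (v : V) : Finset V := {u | s(v, u) ∈ F}

lemma star_eq_image_nbhd (F : Finset (Sym2 V)) (v : V) :
    star F v = (nbhd F v).image (s(v, ·)) := by
  ext e
  simp only [star, nbhd, Finset.mem_filter, Finset.mem_image, Finset.mem_univ, true_and]
  constructor
  · rintro ⟨he, hv⟩
    obtain ⟨u, rfl⟩ := Sym2.mem_iff_exists.mp hv
    exact ⟨u, he, rfl⟩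
  · rintro ⟨u, hu, rfl⟩
    exact ⟨hu, Sym2.mem_mk_left _ _⟩

lemma sum_star (F : Finset (Sym2 V)) (v : V) (g : Sym2 V → ℝ) :
    ∑ e ∈ star F v, g e = ∑ u ∈ nbhd F v, g s(v, u) := by
  rw [star_eq_image_nbhd, Finset.sum_image fun _ _ _ _ h => Sym2.congr_right.mp h]

lemma card_star (F : Finset (Sym2 V)) (v : V) :
    (star F v).card = (nbhd F v).card := by
  rw [star_eq_image_nbhd, Finset.card_image_of_injective _ fun _ _ h => Sym2.congr_right.mp h]

/-- The edges in `F` can be properly coloured, each edge `e` receiving a colour `c` with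
`0 < w e c`. -/
def SupportColourable (F : Finset (Sym2 V)) (w : Sym2 V → C → ℝ) : Prop :=
  ∃ γ : Sym2 V → C, (∀ e ∈ F, 0 < w e (γ e)) ∧
    ∀ e ∈ F, ∀ f ∈ F, e ≠ f → (∃ v, v ∈ e ∧ v ∈ f) → γ e ≠ γ f

variable [Fintype C]

/-- The state of the nibble: `w e c` is the weight of the colour `c` at the edge `e`. Each edge of
`F` carries total weight at least `1`, each colour has weight at most `R` around each vertex (the
load), `D` bounds the degrees, and `B` measures how far the weights are from being spread evenly
over about `D` colours. -/
structure IsNibbleWeight (F : Finset (Sym2 V)) (w : Sym2 V → C → ℝ) (R B D : ℝ) : Prop where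
  nonneg : ∀ e c, 0 ≤ w e c
  le_div : ∀ e c, w e c ≤ B / D
  one_le_sum : ∀ e ∈ F, 1 ≤ ∑ c, w e c
  card_support_le : ∀ e ∈ F, (({c | w e c ≠ 0} : Finset C).card : ℝ) ≤ B * D
  card_star_le : ∀ v, ((star F v).card : ℝ) ≤ D
  sum_star_le : ∀ v c, ∑ e ∈ star F v, w e c ≤ R

variable {F : Finset (Sym2 V)} {w : Sym2 V → C → ℝ} {R B D : ℝ}

namespace IsNibbleWeight

lemma sum_touching_le (h : IsNibbleWeight F w R B D) (e : Sym2 V) (c : C) :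
    ∑ f ∈ touching F e, w f c ≤ 2 * R := by
  induction e using Sym2.ind with
  | _ a b =>
    rw [touching_mk]
    have union_inter := Finset.sum_union_inter (s₁ := star F a) (s₂ := star F b) (f := (w · c))
    have inter_nonneg : 0 ≤ ∑ e ∈ star F a ∩ star F b, w e c :=
      Finset.sum_nonneg fun e _ => h.nonneg e c
    linarith [h.sum_star_le a c, h.sum_star_le b c]

omit [Fintype V] in
theorem supportColourable [Finite V] [Nonempty C] (h : IsNibbleWeight F w R B D)
    (hR : R ≤ 1 / 32) : SupportColourable F w := by
  classical
  have := Fintype.ofFinite V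
  let total (e : F) : ℝ := ∑ c, w e c
  let p (e : F) (c : C) : ℝ := w e c / total e
  have one_le_total (e : F) : 1 ≤ total e := h.one_le_sum e e.2
  have p_mem (e : F) : p e ∈ stdSimplex ℝ C := by
    refine ⟨fun c => div_nonneg (h.nonneg e c) (zero_le_one.trans (one_le_total e)), ?_⟩
    simp only [p, ← Finset.sum_div]
    exact div_self (zero_lt_one.trans_le (one_le_total e)).ne'
  have p_le (e : F) (c : C) : p e c ≤ w e c := div_le_self (h.nonneg e c) (one_le_total e)
  let H : SimpleGraph F :=
    { Adj := fun e f => (e : Sym2 V) ≠ f ∧ ∃ v ∈ (e : Sym2 V), v ∈ (f : Sym2 V)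
      symm := ⟨fun e f ⟨hef, v, hve, hvf⟩ => ⟨hef.symm, v, hvf, hve⟩⟩
      loopless := ⟨fun e he => he.1 rfl⟩ }
  have sum_neighbors_le (e : F) (c : C) : ∑ f ∈ H.neighborFinset e, p f c ≤ 1 / 16 := calc
    ∑ f ∈ H.neighborFinset e, p f c ≤ ∑ f ∈ H.neighborFinset e, w f c :=
      Finset.sum_le_sum fun f _ => p_le f c
    _ = ∑ f ∈ (H.neighborFinset e).map (Function.Embedding.subtype _), w f c := by
      rw [Finset.sum_map]
      rfl
    _ ≤ ∑ f ∈ touching F e, w f c := by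
      refine Finset.sum_le_sum_of_subset_of_nonneg (fun f hf => ?_) fun f _ _ => h.nonneg f c
      obtain ⟨g, hg, rfl⟩ := Finset.mem_map.mp hf
      exact Finset.mem_filter.mpr ⟨g.2, ((H.mem_neighborFinset e g).mp hg).2⟩
    _ ≤ 1 / 16 := by linarith [h.sum_touching_le e c]
  obtain ⟨γ, hγ, proper⟩ := exists_coloring_of_sum_neighborFinset_le H p_mem sum_neighbors_le
  refine ⟨fun e => if he : e ∈ F then γ ⟨e, he⟩ else Classical.arbitrary C, fun e he => ?_,
    fun e he f hf hef hv => ?_⟩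
  · have w_ne : w e (γ ⟨e, he⟩) ≠ 0 := left_ne_zero_of_mul (hγ ⟨e, he⟩)
    simpa [he] using (h.nonneg _ _).lt_of_ne' w_ne
  · simpa [he, hf] using proper ⟨e, he⟩ ⟨f, hf⟩ ⟨hef, hv⟩

end IsNibbleWeight

end NibbleWeight

section Round

lemma one_sub_sum_le_prod_one_sub {κ : Type*} (s : Finset κ) {x : κ → ℝ}
    (hx : ∀ k ∈ s, x k ∈ Set.Icc 0 1) : 1 - ∑ k ∈ s, x k ≤ ∏ k ∈ s, (1 - x k) := by
  classical
  induction s using Finset.induction_on with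
  | empty => simp
  | insert k s hk ih =>
    have ih := ih fun l hl => hx l (Finset.mem_insert_of_mem hl)
    have hxk := hx k (Finset.mem_insert_self k s)
    have sum_nonneg : 0 ≤ ∑ l ∈ s, x l :=
      Finset.sum_nonneg fun l hl => (hx l (Finset.mem_insert_of_mem hl)).1
    rw [Finset.sum_insert hk, Finset.prod_insert hk]
    nlinarith [mul_le_mul_of_nonneg_left ih (sub_nonneg.mpr hxk.2), mul_nonneg hxk.1 sum_nonneg]

/-- The random choices of one round of the nibble: `ω (e, c)` says whether the colour `c` is
activated at the edge `e`. -/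
abbrev Activation (V C : Type*) := Sym2 V × C → Bool

variable {V C : Type*}

/-- The probability with which a colour is activated at an edge. -/
def activationProb (w : Sym2 V → C → ℝ) (θ : ℝ) (i : Sym2 V × C) : ℝ := θ * w i.1 i.2

/-- The event that the colour `c` is activated at no edge of `T`. A vertex or an edge keeps the
colour `c` when this happens for the edges around it. -/
def inactive (T : Finset (Sym2 V)) (c : C) : Set (Activation V C) := {ω | ∀ f ∈ T, ω (f, c) = false}

/-- The probability of `inactive T c`. -/
def inactiveProb (w : Sym2 V → C → ℝ) (θ : ℝ) (T : Finset (Sym2 V)) (c : C) : ℝ :=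
  ∏ f ∈ T, (1 - θ * w f c)

/-- The weight of the colour `c` at the edge `e` after forgetting it unless `c` is inactive on `T`,
rescaled so that its expectation is unchanged. -/
noncomputable def rescaledWeight (w : Sym2 V → C → ℝ) (θ : ℝ) (T : Finset (Sym2 V))
    (ω : Activation V C) (e : Sym2 V) (c : C) : ℝ :=
  w e c * (inactive T c).indicator 1 ω / inactiveProb w θ T c

lemma dependsOn_inactive (T : Finset (Sym2 V)) (c : C) :
    DependsOn (· ∈ inactive T c) ((T : Set (Sym2 V)) ×ˢ {c}) := fun ω ω' hω =>
  eq_iff_iff.mpr <| forall₂_congr fun f hf => by rw [hω (f, c) ⟨hf, rfl⟩]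

lemma dependsOn_rescaledWeight (w : Sym2 V → C → ℝ) (θ : ℝ) (T : Finset (Sym2 V)) (e : Sym2 V)
    (c : C) :
    DependsOn (rescaledWeight w θ T · e c) ((T : Set (Sym2 V)) ×ˢ {c}) := fun ω ω' hω => by
  simp only [rescaledWeight, dependsOn_indicator_one (dependsOn_inactive T c) hω]

section

variable [DecidableEq V] [Fintype C]

/-- A nibble weight together with an activation rate `θ` satisfying the bounds under which one
round of the nibble is analysed. -/
structure IsNibbleRound (F : Finset (Sym2 V)) (w : Sym2 V → C → ℝ) (θ R B D : ℝ) : Prop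
    extends IsNibbleWeight F w R B D where
  rate_pos : 0 < θ
  rate_le : θ ≤ 1 / 4
  load_nonneg : 0 ≤ R
  load_le_one : R ≤ 1
  one_le_spread : 1 ≤ B
  spread_le : B ≤ D

variable {F : Finset (Sym2 V)} {w : Sym2 V → C → ℝ} {θ R B D : ℝ}

namespace IsNibbleRound

lemma degree_pos (h : IsNibbleRound F w θ R B D) : 0 < D := by
  linarith [h.one_le_spread, h.spread_le]

lemma ratio_nonneg (h : IsNibbleRound F w θ R B D) : 0 ≤ B / D :=
  div_nonneg (zero_le_one.trans h.one_le_spread) h.degree_pos.le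

lemma rate_mul_mem_Icc (h : IsNibbleRound F w θ R B D) (e : Sym2 V) (c : C) :
    θ * w e c ∈ Set.Icc 0 1 := by
  have w_le_one : w e c ≤ 1 := (h.le_div e c).trans (div_le_one_of_le₀ h.spread_le h.degree_pos.le)
  exact ⟨mul_nonneg h.rate_pos.le (h.nonneg e c),
    mul_le_one₀ (by linarith [h.rate_le]) (h.nonneg e c) w_le_one⟩

lemma activationProb_mem_Icc (h : IsNibbleRound F w θ R B D) (i : Sym2 V × C) :
    activationProb w θ i ∈ Set.Icc 0 1 :=
  h.rate_mul_mem_Icc i.1 i.2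

lemma one_sub_le_inactiveProb (h : IsNibbleRound F w θ R B D) (T : Finset (Sym2 V)) (c : C) :
    1 - θ * ∑ f ∈ T, w f c ≤ inactiveProb w θ T c := by
  rw [Finset.mul_sum]
  exact one_sub_sum_le_prod_one_sub T fun f _ => h.rate_mul_mem_Icc f c

lemma inactiveProb_star_ge (h : IsNibbleRound F w θ R B D) (v : V) (c : C) :
    1 - θ * R ≤ inactiveProb w θ (star F v) c :=
  (sub_le_sub_left (mul_le_mul_of_nonneg_left (h.sum_star_le v c) h.rate_pos.le) 1).trans
    (h.one_sub_le_inactiveProb _ c)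

lemma half_le_inactiveProb_star (h : IsNibbleRound F w θ R B D) (v : V) (c : C) :
    1 / 2 ≤ inactiveProb w θ (star F v) c := by
  nlinarith [h.inactiveProb_star_ge v c, h.rate_pos, h.rate_le, h.load_nonneg, h.load_le_one]

lemma rescaledWeight_mem_Icc (h : IsNibbleRound F w θ R B D) {T : Finset (Sym2 V)} {c : C}
    (hT : 1 / 2 ≤ inactiveProb w θ T c) (ω : Activation V C) (e : Sym2 V) :
    rescaledWeight w θ T ω e c ∈ Set.Icc 0 (2 * w e c) := by
  have w_nonneg := h.nonneg e c
  rw [rescaledWeight]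
  by_cases hω : ω ∈ inactive T c
  · refine ⟨by simp only [Set.indicator_of_mem hω, Pi.one_apply]; positivity, ?_⟩
    rw [Set.indicator_of_mem hω, Pi.one_apply, div_le_iff₀ (by linarith)]
    nlinarith
  · simpa [hω] using w_nonneg

variable [Fintype V] [DecidableEq C]

lemma prob_inactive (h : IsNibbleRound F w θ R B D) (T : Finset (Sym2 V)) (c : C) :
    prob (bernoulliMass (activationProb w θ)) (inactive T c) = inactiveProb w θ T c := by
  have prob_eq := prob_forall_mem_apply_eq (bernoulliMass_mem_stdSimplex h.activationProb_mem_Icc)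
    (T ×ˢ {c}) fun _ => false
  rw [Finset.prod_product] at prob_eq
  simpa [bernoulliMass, activationProb, inactive, inactiveProb] using prob_eq

lemma expect_rescaledWeight (h : IsNibbleRound F w θ R B D) {T : Finset (Sym2 V)} {c : C}
    (hT : 1 / 2 ≤ inactiveProb w θ T c) (e : Sym2 V) :
    expect (bernoulliMass (activationProb w θ)) (rescaledWeight w θ T · e c) = w e c := by
  simp only [rescaledWeight, mul_div_right_comm]
  rw [expect_const_mul]
  exact (congrArg _ (h.prob_inactive T c)).trans (div_mul_cancel₀ _ (by linarith))

end IsNibbleRound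

end

variable [Fintype V] [DecidableEq V]

/-- The event that the edge `e` receives the colour `c` in this round: it is activated at `e` and
at no other edge meeting `e`. -/
def wins (F : Finset (Sym2 V)) (e : Sym2 V) (c : C) : Set (Activation V C) :=
  {ω | ω (e, c) = true} ∩ inactive ((touching F e).erase e) c

/-- The weight of the colour `c` at the edge `e` after one round: `e` keeps `c` if `c` is inactive
on all edges meeting `e`. -/
noncomputable def newWeight (F : Finset (Sym2 V)) (w : Sym2 V → C → ℝ) (θ : ℝ)
    (ω : Activation V C) (e : Sym2 V) (c : C) : ℝ :=
  rescaledWeight w θ (touching F e) ω e c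

lemma mem_touching_self {F : Finset (Sym2 V)} {e : Sym2 V} (he : e ∈ F) : e ∈ touching F e :=
  Finset.mem_filter.mpr ⟨he, e.out.1, e.out_fst_mem, e.out_fst_mem⟩

lemma dependsOn_wins {F : Finset (Sym2 V)} {e : Sym2 V} (he : e ∈ F) (c : C) :
    DependsOn (· ∈ wins F e c) ((touching F e : Set (Sym2 V)) ×ˢ {c}) := fun ω ω' hω =>
  eq_iff_iff.mpr <| and_congr
    (by simp [hω (e, c) ⟨mem_touching_self he, rfl⟩])
    (Eq.to_iff (dependsOn_inactive _ c fun i hi => hω i ⟨Finset.mem_of_mem_erase hi.1, hi.2⟩))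

variable {F : Finset (Sym2 V)} {w : Sym2 V → C → ℝ} {θ R B D : ℝ}

variable [Fintype C]

lemma dependsOn_sum_newWeight (e : Sym2 V) :
    DependsOn (fun ω => ∑ c : C, newWeight F w θ ω e c)
      (touching F e ×ˢ Finset.univ : Finset (Sym2 V × C)) := fun ω ω' hω =>
  Finset.sum_congr rfl fun c _ =>
    dependsOn_rescaledWeight w θ _ e c fun i hi => hω i (by simpa using hi.1)

namespace IsNibbleRound

lemma rate_mul_sum_touching_le (h : IsNibbleRound F w θ R B D) (e : Sym2 V) (c : C) :
    θ * ∑ f ∈ touching F e, w f c ≤ 1 / 2 := by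
  nlinarith [h.sum_touching_le e c, h.rate_pos, h.rate_le, h.load_nonneg, h.load_le_one]

lemma half_le_inactiveProb_touching (h : IsNibbleRound F w θ R B D) (e : Sym2 V) (c : C) :
    1 / 2 ≤ inactiveProb w θ (touching F e) c := by
  linarith [h.one_sub_le_inactiveProb (touching F e) c, h.rate_mul_sum_touching_le e c]

lemma inactiveProb_star_mul_le (h : IsNibbleRound F w θ R B D) (a b : V) (c : C) :
    inactiveProb w θ (star F a) c * inactiveProb w θ (star F b) c
      ≤ inactiveProb w θ (touching F s(a, b)) c := by
  have factor_nonneg (e : Sym2 V) : 0 ≤ 1 - θ * w e c :=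
    sub_nonneg.mpr (h.rate_mul_mem_Icc e c).2
  rw [touching_mk, inactiveProb, inactiveProb, ← Finset.prod_union_inter]
  exact mul_le_of_le_one_right (Finset.prod_nonneg fun e _ => factor_nonneg e)
    (Finset.prod_le_one (fun e _ => factor_nonneg e)
      fun e _ => sub_le_self _ (h.rate_mul_mem_Icc e c).1)

lemma sum_activationProb_mul_sq_le (h : IsNibbleRound F w θ R B D) {e : Sym2 V} (he : e ∈ F) :
    ∑ i ∈ touching F e ×ˢ Finset.univ, activationProb w θ i * (2 * w e i.2) ^ 2
      ≤ 2 * B ^ 3 / D := by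
  have hD := h.degree_pos
  have colour_le (c : C) :
      θ * (∑ f ∈ touching F e, w f c) * (2 * w e c) ^ 2 ≤ 2 * (B / D) ^ 2 := by
    have sq_le : w e c ^ 2 ≤ (B / D) ^ 2 := pow_le_pow_left₀ (h.nonneg e c) (h.le_div e c) 2
    nlinarith [mul_le_mul_of_nonneg_right (h.rate_mul_sum_touching_le e c) (sq_nonneg (w e c))]
  calc ∑ i ∈ touching F e ×ˢ Finset.univ, activationProb w θ i * (2 * w e i.2) ^ 2
      = ∑ c, θ * (∑ f ∈ touching F e, w f c) * (2 * w e c) ^ 2 := by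
        simp only [Finset.sum_product_right, activationProb, ← Finset.sum_mul, ← Finset.mul_sum]
    _ = ∑ c with w e c ≠ 0, θ * (∑ f ∈ touching F e, w f c) * (2 * w e c) ^ 2 := by
        refine (Finset.sum_filter_of_ne fun c _ hc => ?_).symm
        contrapose! hc
        simp [hc]
    _ ≤ ∑ c with w e c ≠ 0, 2 * (B / D) ^ 2 := Finset.sum_le_sum fun c _ => colour_le c
    _ ≤ B * D * (2 * (B / D) ^ 2) := by
        rw [Finset.sum_const, nsmul_eq_mul]
        exact mul_le_mul_of_nonneg_right (h.card_support_le e he) (by positivity)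
    _ = 2 * B ^ 3 / D := by field_simp

variable [DecidableEq C]

lemma mul_le_prob_wins (h : IsNibbleRound F w θ R B D) (e : Sym2 V) (c : C) :
    θ * (1 - 2 * θ) * w e c ≤ prob (bernoulliMass (activationProb w θ)) (wins F e c) := by
  have hμ := bernoulliMass_mem_stdSimplex h.activationProb_mem_Icc
  have prob_eq : prob (bernoulliMass (activationProb w θ)) (wins F e c)
      = θ * w e c * inactiveProb w θ ((touching F e).erase e) c := by
    rw [prob, wins, Set.inter_indicator_one,
      ← h.prob_inactive, ← show bernoulliMass (activationProb w θ) (e, c) true = θ * w e c from rfl,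
      ← prob_apply_eq hμ]
    exact expect_mul_of_dependsOn hμ (S := {(e, c)})
      (dependsOn_indicator_one fun ω ω' hω => by simp [hω (e, c) rfl])
      (dependsOn_indicator_one (dependsOn_inactive _ c)) (by simp)
  have sum_erase_le : ∑ f ∈ (touching F e).erase e, w f c ≤ 2 := calc
    _ ≤ ∑ f ∈ touching F e, w f c :=
      Finset.sum_le_sum_of_subset_of_nonneg (Finset.erase_subset _ _) fun f _ _ => h.nonneg f c
    _ ≤ 2 := by linarith [h.sum_touching_le e c, h.load_le_one]
  have le_inactiveProb : 1 - 2 * θ ≤ inactiveProb w θ ((touching F e).erase e) c := by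
    nlinarith [h.one_sub_le_inactiveProb ((touching F e).erase e) c, h.rate_pos]
  rw [prob_eq, mul_right_comm]
  exact mul_le_mul_of_nonneg_left le_inactiveProb (h.rate_mul_mem_Icc e c).1

lemma abs_sum_newWeight_update_sub_le (h : IsNibbleRound F w θ R B D) (e : Sym2 V)
    (i : Sym2 V × C) (ω : Activation V C) :
    |∑ c, newWeight F w θ (Function.update ω i true) e c
      - ∑ c, newWeight F w θ (Function.update ω i false) e c| ≤ 2 * w e i.2 := by
  have other_colours (c : C) (hc : c ≠ i.2) (b : Bool) :
      newWeight F w θ (Function.update ω i b) e c = newWeight F w θ ω e c :=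
    apply_update_of_dependsOn (dependsOn_rescaledWeight w θ _ e c) (fun hi => hc hi.2.symm) ω b
  rw [← Finset.sum_sub_distrib, Finset.sum_eq_single i.2
    (fun c _ hc => by rw [other_colours c hc, other_colours c hc, sub_self]) (by simp)]
  have mem (b : Bool) := h.rescaledWeight_mem_Icc
    (h.half_le_inactiveProb_touching e i.2) (Function.update ω i b) e
  exact abs_sub_le_of_nonneg_of_le (mem true).1 (mem true).2 (mem false).1 (mem false).2

theorem prob_sum_newWeight_lt_le (h : IsNibbleRound F w θ R B D) {e : Sym2 V} (he : e ∈ F) {t : ℝ}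
    (ht : 0 ≤ t) (htB : t * (4 * (B / D)) ≤ 1) (ε : ℝ) :
    prob (bernoulliMass (activationProb w θ)) {ω | ∑ c, newWeight F w θ ω e c < 1 - ε}
      ≤ Real.exp (-t * ε + t ^ 2 * (2 * B ^ 3 / D)) := by
  refine prob_lt_sub_le_exp_of_bounded_differences h.activationProb_mem_Icc
    (dependsOn_sum_newWeight e) ht (fun i _ => le_trans ?_ htB)
    (fun i _ => h.abs_sum_newWeight_update_sub_le e i) ?_ (h.sum_activationProb_mul_sq_le he)
  · exact mul_le_mul_of_nonneg_left (by linarith [h.le_div e i.2, h.ratio_nonneg]) ht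
  · rw [expect_sum]
    simpa only [newWeight, h.expect_rescaledWeight (h.half_le_inactiveProb_touching e _)] using
      h.one_le_sum e he

end IsNibbleRound

end Round

section Load

lemma prob_forall_notMem_of_pairwiseDisjoint {ι : Type*} {A : ι → Type*} [Fintype ι]
    [DecidableEq ι] [∀ i, Fintype (A i)] {μ : ∀ i, A i → ℝ} (hμ : ∀ i, μ i ∈ stdSimplex ℝ (A i))
    {κ : Type*} (s : Finset κ) {E : κ → Set (∀ i, A i)} (hE : (s : Set κ).PairwiseDisjoint E) :
    prob μ {ω | ∀ k ∈ s, ω ∉ E k} = 1 - ∑ k ∈ s, prob μ (E k) := by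
  have compl_eq : {ω | ∀ k ∈ s, ω ∉ E k} = (⋃ k ∈ s, E k)ᶜ := by
    ext ω
    simp
  have indicator_eq : (⋃ k ∈ s, E k)ᶜ.indicator (1 : (∀ i, A i) → ℝ)
      = fun ω => 1 - ∑ k ∈ s, (E k).indicator 1 ω := by
    rw [Set.indicator_compl, Finset.indicator_biUnion s E hE]
    rfl
  rw [compl_eq, prob, indicator_eq, expect_sub, expect_const hμ, expect_sum]
  rfl

variable {V C : Type*} [DecidableEq V]

/-- An upper bound for the probability that an edge receives no colour other than a given one. -/
noncomputable def freeBound (θ B D : ℝ) : ℝ := Real.exp (-(θ * (1 - 2 * θ) * (1 - B / D)))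

lemma IsNibbleRound.freeBound_mem_Icc [Fintype C] {F : Finset (Sym2 V)} {w : Sym2 V → C → ℝ}
    {θ R B D : ℝ} (h : IsNibbleRound F w θ R B D) :
    freeBound θ B D ∈ Set.Icc 0 1 := by
  refine ⟨(Real.exp_pos _).le, Real.exp_le_one_iff.mpr (neg_nonpos.mpr ?_)⟩
  have ratio_le_one : B / D ≤ 1 := div_le_one_of_le₀ h.spread_le h.degree_pos.le
  exact mul_nonneg (mul_nonneg h.rate_pos.le (by linarith [h.rate_le])) (by linarith)

variable [Fintype V]

/-- The event that the edge `e` receives no colour other than `c`. -/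
def freeOfOthers (F : Finset (Sym2 V)) (e : Sym2 V) (c : C) : Set (Activation V C) :=
  {ω | ∀ d ≠ c, ω ∉ wins F e d}

/-- The load of the colour `c` at the vertex `v` after one round, up to the factor coming from the
edges around `v` itself: the weights kept by the other ends of the edges at `v` that receive no
colour other than `c`. -/
noncomputable def load (F : Finset (Sym2 V)) (w : Sym2 V → C → ℝ) (θ : ℝ) (v : V) (c : C)
    (ω : Activation V C) : ℝ :=
  ∑ u ∈ nbhd F v, rescaledWeight w θ (star F u) ω s(v, u) c
    * (freeOfOthers F s(v, u) c).indicator 1 ω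

/-- An upper bound for the change of `∑ u ∈ nbhd F v, rescaledWeight w θ (star F u) ω s(v, u) c`
when the activation of `c` at the edge `f` is changed. -/
def influence (F : Finset (Sym2 V)) (w : Sym2 V → C → ℝ) (v : V) (c : C) (f : Sym2 V) : ℝ :=
  ∑ u ∈ nbhd F v with u ∈ f, 2 * w s(v, u) c

variable {F : Finset (Sym2 V)} {w : Sym2 V → C → ℝ} {θ R B D : ℝ}

lemma mem_of_mem_nbhd {u v : V} (hu : u ∈ nbhd F v) : s(v, u) ∈ F := (Finset.mem_filter.mp hu).2

lemma pairwiseDisjoint_wins (v : V) (c : C) :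
    (nbhd F v : Set V).PairwiseDisjoint fun u => wins F s(v, u) c := by
  refine fun u hu u' _ huu' => Set.disjoint_left.mpr fun ω hω hω' => ?_
  have mem_touching : s(v, u) ∈ (touching F s(v, u')).erase s(v, u') :=
    Finset.mem_erase.mpr ⟨fun h => huu' (Sym2.congr_right.mp h), Finset.mem_filter.mpr
      ⟨mem_of_mem_nbhd hu, v, Sym2.mem_mk_left v u', Sym2.mem_mk_left v u⟩⟩
  exact Bool.false_ne_true ((hω'.2 _ mem_touching).symm.trans hω.1)

lemma dependsOn_freeOfOthers {e : Sym2 V} (he : e ∈ F) (c : C) :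
    DependsOn (· ∈ freeOfOthers F e c) ((touching F e : Set (Sym2 V)) ×ˢ {c}ᶜ) := fun _ _ hω =>
  eq_iff_iff.mpr <| forall₂_congr fun c' hc' => not_congr <|
    Eq.to_iff (dependsOn_wins he c' fun i hi => hω i ⟨hi.1, fun h => hc' (hi.2.symm.trans h)⟩)

variable [Fintype C]

namespace IsNibbleRound

lemma influence_le (h : IsNibbleRound F w θ R B D) (v : V) (c : C) (f : Sym2 V) :
    influence F w v c f ≤ 4 * (B / D) := by
  have card_le : ({u ∈ nbhd F v | u ∈ f}).card ≤ 2 := by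
    have card_toFinset_le : f.toFinset.card ≤ 2 := by
      rw [Sym2.card_toFinset]
      split_ifs <;> norm_num
    exact (Finset.card_le_card fun u hu =>
      Sym2.mem_toFinset.mpr (Finset.mem_filter.mp hu).2).trans card_toFinset_le
  calc influence F w v c f ≤ ∑ u ∈ nbhd F v with u ∈ f, 2 * (B / D) :=
        Finset.sum_le_sum fun u _ => by linarith [h.le_div s(v, u) c]
    _ ≤ 2 * (2 * (B / D)) := by
        rw [Finset.sum_const, nsmul_eq_mul]
        exact mul_le_mul_of_nonneg_right (by exact_mod_cast card_le)
          (mul_nonneg zero_le_two h.ratio_nonneg)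
    _ = 4 * (B / D) := by ring

lemma sum_mul_influence_le (h : IsNibbleRound F w θ R B D) (v : V) (c : C) :
    ∑ f ∈ F, w f c * influence F w v c f ≤ 2 := by
  have nbhd_sum_le : ∑ u ∈ nbhd F v, w s(v, u) c ≤ R := by
    simpa only [sum_star] using h.sum_star_le v c
  calc ∑ f ∈ F, w f c * influence F w v c f
      = ∑ u ∈ nbhd F v, 2 * w s(v, u) c * ∑ f ∈ star F u, w f c := by
        simp only [influence, star, Finset.sum_filter, Finset.mul_sum]
        rw [Finset.sum_comm]
        exact Finset.sum_congr rfl fun u _ => Finset.sum_congr rfl fun f _ => by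
          split_ifs <;> ring
    _ ≤ ∑ u ∈ nbhd F v, 2 * w s(v, u) c * 1 := Finset.sum_le_sum fun u _ =>
        mul_le_mul_of_nonneg_left ((h.sum_star_le u c).trans h.load_le_one)
          (mul_nonneg zero_le_two (h.nonneg _ _))
    _ ≤ 2 := by
        simp only [mul_one, ← Finset.mul_sum]
        linarith [h.load_le_one]

lemma influence_nonneg (h : IsNibbleRound F w θ R B D) (v : V) (c : C) (f : Sym2 V) :
    0 ≤ influence F w v c f :=
  Finset.sum_nonneg fun _ _ => mul_nonneg zero_le_two (h.nonneg _ _)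

lemma sum_activationProb_mul_influence_sq_le (h : IsNibbleRound F w θ R B D) (v : V) (c : C) :
    ∑ i ∈ F ×ˢ {c}, activationProb w θ i * influence F w v c i.1 ^ 2 ≤ 2 * B / D := by
  have rate_mul_le (f : Sym2 V) : θ * influence F w v c f ≤ B / D := by
    nlinarith [h.influence_le v c f, h.influence_nonneg v c f, h.rate_pos, h.rate_le]
  calc ∑ i ∈ F ×ˢ {c}, activationProb w θ i * influence F w v c i.1 ^ 2
      = ∑ f ∈ F, θ * influence F w v c f * (w f c * influence F w v c f) := by
        simp only [Finset.sum_product, Finset.sum_singleton, activationProb]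
        exact Finset.sum_congr rfl fun f _ => by ring
    _ ≤ ∑ f ∈ F, B / D * (w f c * influence F w v c f) := Finset.sum_le_sum fun f _ =>
        mul_le_mul_of_nonneg_right (rate_mul_le f)
          (mul_nonneg (h.nonneg f c) (h.influence_nonneg v c f))
    _ ≤ B / D * 2 := by
        rw [← Finset.mul_sum]
        exact mul_le_mul_of_nonneg_left (h.sum_mul_influence_le v c) h.ratio_nonneg
    _ = 2 * B / D := by ring

variable [DecidableEq C]

lemma prob_forall_notMem_wins_le (h : IsNibbleRound F w θ R B D) {v : V} {S : Finset V}
    (hS : S ⊆ nbhd F v) (c : C) :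
    prob (bernoulliMass (activationProb w θ)) {ω | ∀ u ∈ S, ω ∉ wins F s(v, u) c}
      ≤ Real.exp (-∑ u ∈ S, θ * (1 - 2 * θ) * w s(v, u) c) := by
  rw [prob_forall_notMem_of_pairwiseDisjoint
    (bernoulliMass_mem_stdSimplex h.activationProb_mem_Icc) S
    ((pairwiseDisjoint_wins v c).subset (Finset.coe_subset.mpr hS))]
  have sum_le : ∑ u ∈ S, θ * (1 - 2 * θ) * w s(v, u) c
      ≤ ∑ u ∈ S, prob (bernoulliMass (activationProb w θ)) (wins F s(v, u) c) :=
    Finset.sum_le_sum fun u _ => h.mul_le_prob_wins s(v, u) c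
  linarith [Real.add_one_le_exp (-∑ u ∈ S, θ * (1 - 2 * θ) * w s(v, u) c)]

-- Different colours are activated independently, while for each colour at most one edge at `v`
-- can receive it.
lemma expect_prod_freeOfOthers_le (h : IsNibbleRound F w θ R B D) {v : V} {S : Finset V}
    (hS : S ⊆ nbhd F v) (c : C) :
    expect (bernoulliMass (activationProb w θ))
        (fun ω => ∏ u ∈ S, (freeOfOthers F s(v, u) c).indicator 1 ω)
      ≤ freeBound θ B D ^ S.card := by
  have hμ := bernoulliMass_mem_stdSimplex h.activationProb_mem_Icc
  let noWinner (c' : C) : Set (Activation V C) := {ω | ∀ u ∈ S, ω ∉ wins F s(v, u) c'}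
  have indicator_eq (ω : Activation V C) :
      (∏ u ∈ S, (freeOfOthers F s(v, u) c).indicator 1 ω : ℝ)
        = ∏ c' ∈ Finset.univ.erase c, (noWinner c').indicator 1 ω := by
    classical
    have forall_iff : (∀ u ∈ S, ω ∈ freeOfOthers F s(v, u) c)
        ↔ ∀ c' ∈ Finset.univ.erase c, ω ∈ noWinner c' :=
      ⟨fun hω c' hc' u hu => hω u hu c' (Finset.ne_of_mem_erase hc'),
        fun hω u hu c' hc' => hω c' (Finset.mem_erase.mpr ⟨hc', Finset.mem_univ c'⟩) u hu⟩
    simp only [Set.indicator_apply, Pi.one_apply]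
    rw [Finset.prod_ite_zero, Finset.prod_ite_zero, Finset.prod_const_one, Finset.prod_const_one]
    split_ifs <;> tauto
  have noWinner_dependsOn (c' : C) : DependsOn (· ∈ noWinner c') {i : Sym2 V × C | i.2 = c'} :=
    fun ω ω' hω => eq_iff_iff.mpr <| forall₂_congr fun u hu => not_congr <|
      Eq.to_iff (dependsOn_wins (mem_of_mem_nbhd (hS hu)) c' fun i hi => hω i hi.2)
  have sum_others_ge (u : V) (hu : u ∈ S) : θ * (1 - 2 * θ) * (1 - B / D)
      ≤ ∑ c' ∈ Finset.univ.erase c, θ * (1 - 2 * θ) * w s(v, u) c' := by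
    rw [← Finset.mul_sum]
    refine mul_le_mul_of_nonneg_left ?_ (mul_nonneg h.rate_pos.le (by linarith [h.rate_le]))
    have one_le := h.one_le_sum _ (mem_of_mem_nbhd (hS hu))
    rw [← Finset.add_sum_erase _ _ (Finset.mem_univ c)] at one_le
    linarith [h.le_div s(v, u) c]
  calc expect (bernoulliMass (activationProb w θ))
        (fun ω => ∏ u ∈ S, (freeOfOthers F s(v, u) c).indicator 1 ω)
      = ∏ c' ∈ Finset.univ.erase c, prob (bernoulliMass (activationProb w θ)) (noWinner c') := by
        simp only [indicator_eq]
        exact expect_prod_of_dependsOn hμ _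
          (fun c' _ => dependsOn_indicator_one (noWinner_dependsOn c'))
          fun c₁ _ c₂ _ hc => Set.disjoint_left.mpr fun i h₁ h₂ => hc (h₁.symm.trans h₂)
    _ ≤ ∏ c' ∈ Finset.univ.erase c, Real.exp (-∑ u ∈ S, θ * (1 - 2 * θ) * w s(v, u) c') :=
        Finset.prod_le_prod (fun c' _ => prob_nonneg hμ _)
          fun c' _ => h.prob_forall_notMem_wins_le hS c'
    _ ≤ freeBound θ B D ^ S.card := by
        rw [← Real.exp_sum, Finset.sum_neg_distrib, Finset.sum_comm, freeBound, ← Real.exp_nat_mul,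
          Real.exp_le_exp, mul_neg, neg_le_neg_iff, ← nsmul_eq_mul, ← Finset.sum_const]
        exact Finset.sum_le_sum sum_others_ge

lemma abs_sum_rescaledWeight_update_sub_le (h : IsNibbleRound F w θ R B D) (v : V) (c : C)
    (f : Sym2 V) (ω : Activation V C) :
    |∑ u ∈ nbhd F v, rescaledWeight w θ (star F u) (Function.update ω (f, c) true) s(v, u) c
      - ∑ u ∈ nbhd F v, rescaledWeight w θ (star F u) (Function.update ω (f, c) false) s(v, u) c|
      ≤ influence F w v c f := by
  rw [← Finset.sum_sub_distrib, influence, Finset.sum_filter]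
  refine (Finset.abs_sum_le_sum_abs _ _).trans (Finset.sum_le_sum fun u _ => ?_)
  split_ifs with huf
  · have mem (b : Bool) := h.rescaledWeight_mem_Icc (h.half_le_inactiveProb_star u c)
      (Function.update ω (f, c) b) s(v, u)
    exact abs_sub_le_of_nonneg_of_le (mem true).1 (mem true).2 (mem false).1 (mem false).2
  · have unchanged (b : Bool) :=
      apply_update_of_dependsOn (dependsOn_rescaledWeight w θ (star F u) s(v, u) c)
        (i := (f, c)) (fun hi => huf (Finset.mem_filter.mp hi.1).2) ω b
    rw [unchanged, unchanged, sub_self, abs_zero]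

theorem expect_exp_sum_rescaledWeight_le (h : IsNibbleRound F w θ R B D) (v : V) (c : C) {t : ℝ}
    (ht : 0 ≤ t) (htB : t * (4 * (B / D)) ≤ 1) :
    expect (bernoulliMass (activationProb w θ))
        (fun ω => Real.exp (t * ∑ u ∈ nbhd F v, rescaledWeight w θ (star F u) ω s(v, u) c))
      ≤ Real.exp (t * R + t ^ 2 * (2 * B / D)) := by
  have depends : DependsOn
      (fun ω => ∑ u ∈ nbhd F v, rescaledWeight w θ (star F u) ω s(v, u) c)
      (F ×ˢ {c} : Finset (Sym2 V × C)) := fun ω ω' hω => Finset.sum_congr rfl fun u _ =>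
    dependsOn_rescaledWeight w θ (star F u) s(v, u) c fun i hi =>
      hω i (Finset.mem_coe.mpr
        (Finset.mem_product.mpr ⟨(Finset.mem_filter.mp hi.1).1, Finset.mem_singleton.mpr hi.2⟩))
  have mean_le : expect (bernoulliMass (activationProb w θ))
      (fun ω => ∑ u ∈ nbhd F v, rescaledWeight w θ (star F u) ω s(v, u) c) ≤ R := by
    rw [expect_sum]
    simpa only [h.expect_rescaledWeight (h.half_le_inactiveProb_star _ c), sum_star] using
      h.sum_star_le v c
  refine (expect_exp_le_of_bounded_differences h.activationProb_mem_Icc depends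
    (c := fun i => influence F w v c i.1) (fun i _ => ?_) fun i hi ω => ?_).trans
    (Real.exp_le_exp.mpr (add_le_add (mul_le_mul_of_nonneg_left mean_le ht)
      (mul_le_mul_of_nonneg_left (h.sum_activationProb_mul_influence_sq_le v c) (sq_nonneg t))))
  · rw [abs_of_nonneg ht]
    exact (mul_le_mul_of_nonneg_left (h.influence_le v c i.1) ht).trans htB
  · obtain ⟨f, c'⟩ := i
    obtain rfl : c' = c := by simpa using (Finset.mem_product.mp hi).2
    exact h.abs_sum_rescaledWeight_update_sub_le v c' f ω

lemma expect_exp_load_le (h : IsNibbleRound F w θ R B D) (v : V) (c : C) {t : ℝ}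
    (ht : 0 ≤ t) (htB : t * (4 * (B / D)) ≤ 1) :
    expect (bernoulliMass (activationProb w θ)) (fun ω => Real.exp (t * load F w θ v c ω))
      ≤ Real.exp (t ^ 2 * ((nbhd F v).card * (2 * (B / D)) ^ 2))
        * Real.exp (t * freeBound θ B D * R + (t * freeBound θ B D) ^ 2 * (2 * B / D)) := by
  have hq := h.freeBound_mem_Icc
  have weight_dependsOn (u : V) : DependsOn (rescaledWeight w θ (star F u) · s(v, u) c)
      {i : Sym2 V × C | i.2 = c} := fun _ _ hω =>
    dependsOn_rescaledWeight w θ (star F u) s(v, u) c fun i hi => hω i hi.2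
  have free_dependsOn (u : V) (hu : u ∈ nbhd F v) :
      DependsOn (· ∈ freeOfOthers F s(v, u) c) {i : Sym2 V × C | i.2 = c}ᶜ := fun _ _ hω =>
    dependsOn_freeOfOthers (mem_of_mem_nbhd hu) c fun i hi => hω i hi.2
  have weight_mem_Icc (u : V) (ω : Activation V C) :
      rescaledWeight w θ (star F u) ω s(v, u) c ∈ Set.Icc 0 (2 * (B / D)) := by
    have mem := h.rescaledWeight_mem_Icc (h.half_le_inactiveProb_star u c) ω s(v, u)
    exact ⟨mem.1, mem.2.trans (by linarith [h.le_div s(v, u) c])⟩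
  refine (expect_exp_sum_mul_indicator_le_exp_mul
    (bernoulliMass_mem_stdSimplex h.activationProb_mem_Icc) disjoint_compl_right
    (fun u _ => weight_dependsOn u) free_dependsOn (fun u _ => weight_mem_Icc u) ht
    (by nlinarith [mul_nonneg ht h.ratio_nonneg]) hq
    fun S hS => h.expect_prod_freeOfOthers_le hS c).trans
    (mul_le_mul_of_nonneg_left (h.expect_exp_sum_rescaledWeight_le v c (mul_nonneg ht hq.1) ?_)
      (Real.exp_nonneg _))
  have ratio_nonneg := h.ratio_nonneg
  exact (mul_le_mul_of_nonneg_right (mul_le_of_le_one_right ht hq.2) (by positivity)).trans htB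

theorem prob_lt_load_le (h : IsNibbleRound F w θ R B D) (v : V) (c : C) {t : ℝ}
    (ht : 0 ≤ t) (htB : t * (4 * (B / D)) ≤ 1) (ε : ℝ) :
    prob (bernoulliMass (activationProb w θ)) {ω | freeBound θ B D * R + ε < load F w θ v c ω}
      ≤ Real.exp (-t * ε + t ^ 2 * (6 * B ^ 3 / D)) := by
  have hD := h.degree_pos
  have hB := h.one_le_spread
  have hq := h.freeBound_mem_Icc
  have card_le : ((nbhd F v).card : ℝ) * (2 * (B / D)) ^ 2 ≤ 4 * B ^ 2 / D := calc
    _ ≤ D * (2 * (B / D)) ^ 2 :=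
      mul_le_mul_of_nonneg_right (by simpa only [card_star] using h.card_star_le v) (sq_nonneg _)
    _ = 4 * B ^ 2 / D := by
      field_simp
      ring
  have sq_le : (t * freeBound θ B D) ^ 2 * (2 * B / D) ≤ t ^ 2 * (2 * B / D) := by
    gcongr
    exacts [mul_nonneg ht hq.1, mul_le_of_le_one_right ht hq.2]
  have variance_le : 4 * B ^ 2 / D + 2 * B / D ≤ 6 * B ^ 3 / D := by
    rw [← add_div]
    gcongr
    nlinarith [pow_le_pow_right₀ hB (show 2 ≤ 3 by norm_num), le_self_pow₀ hB three_ne_zero]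
  refine (prob_lt_le_exp_mul_expect_exp (bernoulliMass_mem_stdSimplex h.activationProb_mem_Icc)
    _ ht _).trans ((mul_le_mul_of_nonneg_left (h.expect_exp_load_le v c ht htB)
      (Real.exp_nonneg _)).trans ?_)
  rw [← Real.exp_add, ← Real.exp_add, Real.exp_le_exp]
  nlinarith [mul_le_mul_of_nonneg_left card_le (sq_nonneg t),
    mul_le_mul_of_nonneg_left variance_le (sq_nonneg t)]

end IsNibbleRound

end Load

section NextRound

lemma card_biUnion_le_mul {α β : Type*} [DecidableEq β] (s : Finset α) (t : α → Finset β) {b : ℝ}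
    (hb : ∀ a ∈ s, ((t a).card : ℝ) ≤ b) : ((s.biUnion t).card : ℝ) ≤ s.card * b := calc
  ((s.biUnion t).card : ℝ) ≤ ∑ a ∈ s, ((t a).card : ℝ) := by
    exact_mod_cast Finset.card_biUnion_le
  _ ≤ ∑ _a ∈ s, b := Finset.sum_le_sum hb
  _ = s.card * b := by rw [Finset.sum_const, nsmul_eq_mul]

variable {V C : Type*} [DecidableEq V]

/-- The colours of nonzero weight at some edge at `v`. -/
noncomputable def activeColours [Fintype C] [DecidableEq C] (F : Finset (Sym2 V))
    (w : Sym2 V → C → ℝ) (v : V) : Finset C :=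
  (star F v).biUnion fun e => {c | w e c ≠ 0}

lemma IsNibbleRound.card_activeColours_le [Fintype C] [DecidableEq C]
    {F : Finset (Sym2 V)} {w : Sym2 V → C → ℝ} {θ R B D : ℝ} (h : IsNibbleRound F w θ R B D)
    (v : V) :
    ((activeColours F w v).card : ℝ) ≤ B * D ^ 2 := by
  have hD := h.degree_pos
  have hB := h.one_le_spread
  calc ((activeColours F w v).card : ℝ) ≤ (star F v).card * (B * D) :=
        card_biUnion_le_mul _ _ fun e he => h.card_support_le e (Finset.mem_filter.mp he).1
    _ ≤ D * (B * D) := mul_le_mul_of_nonneg_right (h.card_star_le v) (by positivity)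
    _ = B * D ^ 2 := by ring

variable [Fintype V]

/-- The vertex `v` together with its neighbours in `F`. -/
def closedNbhd (F : Finset (Sym2 V)) (v : V) : Finset V := insert v (nbhd F v)

/-- The edges of `F` within distance one of the vertex `v`. One round of the nibble is determined
around `v` by the activations at these edges. -/
def edgesNear (F : Finset (Sym2 V)) (v : V) : Finset (Sym2 V) :=
  {f ∈ F | ∃ a ∈ closedNbhd F v, a ∈ f}

open Classical in
/-- The edges of `F` that receive no colour in the round with outcome `ω`. -/
noncomputable def uncoloured (F : Finset (Sym2 V)) (ω : Activation V C) : Finset (Sym2 V) :=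
  {e ∈ F | ∀ c, ω ∉ wins F e c}

/-- The weight passed on to the next round: every edge is renormalised by the same factor, so that a
total weight of at least `1 - ε` becomes at least `1`. -/
noncomputable def nextWeight (F : Finset (Sym2 V)) (w : Sym2 V → C → ℝ) (θ ε : ℝ)
    (ω : Activation V C) (e : Sym2 V) (c : C) : ℝ :=
  newWeight F w θ ω e c / (1 - ε)

variable {F : Finset (Sym2 V)} {w : Sym2 V → C → ℝ} {θ R B D ε T : ℝ}

lemma mem_closedNbhd_comm {u v : V} : u ∈ closedNbhd F v ↔ v ∈ closedNbhd F u := by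
  simp [closedNbhd, nbhd, eq_comm, Sym2.eq_swap]

lemma mem_closedNbhd_of_mem {e : Sym2 V} (he : e ∈ F) {u v : V} (hu : u ∈ e) (hv : v ∈ e) :
    u ∈ closedNbhd F v := by
  obtain ⟨u', rfl⟩ := Sym2.mem_iff_exists.mp hv
  obtain rfl | rfl := Sym2.mem_iff.mp hu
  · exact Finset.mem_insert_self u _
  · exact Finset.mem_insert_of_mem (Finset.mem_filter.mpr ⟨Finset.mem_univ u, he⟩)

lemma touching_subset_edgesNear {e : Sym2 V} (he : e ∈ F) {v : V} (hv : v ∈ e) :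
    touching F e ⊆ edgesNear F v := fun f hf => by
  obtain ⟨hfF, a, hae, haf⟩ := Finset.mem_filter.mp hf
  exact Finset.mem_filter.mpr ⟨hfF, a, mem_closedNbhd_of_mem he hae hv, haf⟩

lemma dependsOn_load [Fintype C] (w : Sym2 V → C → ℝ) (θ : ℝ) (v : V) (c : C) :
    DependsOn (load F w θ v c) (edgesNear F v ×ˢ Finset.univ : Finset (Sym2 V × C)) := by
  refine fun ω ω' hω => Finset.sum_congr rfl fun u hu => ?_
  have near {f : Sym2 V} (hf : f ∈ touching F s(v, u)) (c' : C) : ω (f, c') = ω' (f, c') :=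
    hω (f, c') (Finset.mem_coe.mpr (Finset.mem_product.mpr
      ⟨touching_subset_edgesNear (mem_of_mem_nbhd hu) (Sym2.mem_mk_left v u) hf,
        Finset.mem_univ c'⟩))
  have star_subset : star F u ⊆ touching F s(v, u) := touching_mk F v u ▸ Finset.subset_union_right
  exact congrArg₂ (· * ·)
    (dependsOn_rescaledWeight w θ (star F u) s(v, u) c fun i hi => near (star_subset hi.1) i.2)
    (dependsOn_indicator_one (dependsOn_freeOfOthers (mem_of_mem_nbhd hu) c)
      fun i hi => near hi.1 i.2)

lemma exists_mem_closedNbhd_of_not_disjoint {v k : V}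
    (h : ¬ Disjoint (edgesNear F v) (edgesNear F k)) :
    k ∈ (closedNbhd F v).biUnion fun a => (closedNbhd F a).biUnion (closedNbhd F) := by
  obtain ⟨f, hfv, hfk⟩ := Finset.not_disjoint_iff.mp h
  obtain ⟨hf, a, hav, haf⟩ := Finset.mem_filter.mp hfv
  obtain ⟨-, b, hbk, hbf⟩ := Finset.mem_filter.mp hfk
  simp only [Finset.mem_biUnion]
  exact ⟨a, hav, b, mem_closedNbhd_of_mem hf hbf haf, mem_closedNbhd_comm.mp hbk⟩

lemma mem_uncoloured {ω : Activation V C} {e : Sym2 V} :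
    e ∈ uncoloured F ω ↔ e ∈ F ∧ ∀ c, ω ∉ wins F e c := by
  simp [uncoloured]

variable [Fintype C]

/-- The event that the round fails around `v`: some edge at `v` loses more than `ε` of its total
weight, or the load of some colour at `v` exceeds `T`. -/
def failsAt [DecidableEq C] (F : Finset (Sym2 V)) (w : Sym2 V → C → ℝ) (θ ε T : ℝ) (v : V) :
    Set (Activation V C) :=
  (⋃ e ∈ star F v, {ω | ∑ c, newWeight F w θ ω e c < 1 - ε})
    ∪ ⋃ c ∈ activeColours F w v, {ω | T < load F w θ v c ω}

/-- The round with outcome `ω` succeeds: only colours of nonzero weight are activated, no edge loses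
more than `ε` of its total weight, and all loads are at most `T`. -/
structure IsGoodActivation (F : Finset (Sym2 V)) (w : Sym2 V → C → ℝ) (θ ε T : ℝ)
    (ω : Activation V C) : Prop where
  weight_ne_zero : ∀ e c, ω (e, c) = true → w e c ≠ 0
  one_sub_le_sum : ∀ e ∈ F, 1 - ε ≤ ∑ c, newWeight F w θ ω e c
  load_le : ∀ v c, load F w θ v c ω ≤ T

lemma dependsOn_failsAt [DecidableEq C] (v : V) :
    DependsOn (· ∈ failsAt F w θ ε T v)
      (edgesNear F v ×ˢ Finset.univ : Finset (Sym2 V × C)) := by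
  intro ω ω' hω
  have sum_eq (e : Sym2 V) (he : e ∈ star F v) :
      ∑ c, newWeight F w θ ω e c = ∑ c, newWeight F w θ ω' e c := by
    obtain ⟨heF, hv⟩ := Finset.mem_filter.mp he
    exact dependsOn_sum_newWeight e fun i hi => hω i <| Finset.mem_coe.mpr <|
      Finset.product_subset_product_left (touching_subset_edgesNear heF hv) hi
  have load_eq (c : C) : load F w θ v c ω = load F w θ v c ω' := dependsOn_load w θ v c hω
  simp only [failsAt, Set.mem_union, Set.mem_iUnion, Set.mem_ofPred_eq, exists_prop, load_eq,
    eq_iff_iff]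
  exact or_congr_left (exists_congr fun e => and_congr_right fun he => by rw [sum_eq e he])

lemma load_eq_zero_of_notMem_activeColours [DecidableEq C] {v : V} {c : C}
    (hc : c ∉ activeColours F w v) (ω : Activation V C) : load F w θ v c ω = 0 := by
  refine Finset.sum_eq_zero fun u hu => ?_
  have weight_eq_zero : w s(v, u) c = 0 := by
    by_contra hw
    exact hc (Finset.mem_biUnion.mpr ⟨s(v, u), Finset.mem_filter.mpr
      ⟨mem_of_mem_nbhd hu, Sym2.mem_mk_left v u⟩, Finset.mem_filter.mpr ⟨Finset.mem_univ c, hw⟩⟩)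
  rw [rescaledWeight, weight_eq_zero, zero_mul, zero_div, zero_mul]

lemma isGoodActivation_of_forall_notMem_failsAt [DecidableEq C] {ω : Activation V C} (hT : 0 ≤ T)
    (hw : ∀ e c, ω (e, c) = true → w e c ≠ 0) (hω : ∀ v, ω ∉ failsAt F w θ ε T v) :
    IsGoodActivation F w θ ε T ω where
  weight_ne_zero := hw
  one_sub_le_sum e he := by
    by_contra! lt
    exact hω e.out.1 (Or.inl (Set.mem_biUnion (Finset.mem_filter.mpr ⟨he, e.out_fst_mem⟩) lt))
  load_le v c := by
    by_contra! lt
    by_cases hc : c ∈ activeColours F w v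
    · exact hω v (Or.inr (Set.mem_biUnion hc lt))
    · exact (lt.trans_le ((load_eq_zero_of_notMem_activeColours hc ω).trans_le hT)).false

namespace IsNibbleRound

lemma card_closedNbhd_le (h : IsNibbleRound F w θ R B D) (v : V) :
    ((closedNbhd F v).card : ℝ) ≤ D + 1 := by
  have card_le : ((closedNbhd F v).card : ℝ) ≤ (nbhd F v).card + 1 := by
    exact_mod_cast Finset.card_insert_le _ _
  have card_nbhd_le : ((nbhd F v).card : ℝ) ≤ D := card_star F v ▸ h.card_star_le v
  linarith

lemma card_dependent_le (h : IsNibbleRound F w θ R B D) (v : V) :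
    (({k | ¬ Disjoint (edgesNear F v) (edgesNear F k)} : Finset V).card : ℝ) ≤ (D + 1) ^ 3 := by
  have hD := h.degree_pos
  have second_le (a : V) :
      (((closedNbhd F a).biUnion (closedNbhd F)).card : ℝ) ≤ (D + 1) * (D + 1) :=
    (card_biUnion_le_mul _ _ fun b _ => h.card_closedNbhd_le b).trans
      (mul_le_mul_of_nonneg_right (h.card_closedNbhd_le a) (by positivity))
  calc (({k | ¬ Disjoint (edgesNear F v) (edgesNear F k)} : Finset V).card : ℝ)
      ≤ ((closedNbhd F v).biUnion fun a => (closedNbhd F a).biUnion (closedNbhd F)).card :=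
        Nat.cast_le.mpr (Finset.card_le_card fun k hk =>
          exists_mem_closedNbhd_of_not_disjoint (Finset.mem_filter.mp hk).2)
    _ ≤ (closedNbhd F v).card * ((D + 1) * (D + 1)) :=
        card_biUnion_le_mul _ _ fun a _ => second_le a
    _ ≤ (D + 1) * ((D + 1) * (D + 1)) :=
        mul_le_mul_of_nonneg_right (h.card_closedNbhd_le v) (by positivity)
    _ = (D + 1) ^ 3 := by ring

lemma nextWeight_mem_Icc (h : IsNibbleRound F w θ R B D) (hε : ε ≤ 1 / 2) (ω : Activation V C)
    (e : Sym2 V) (c : C) : nextWeight F w θ ε ω e c ∈ Set.Icc 0 (4 * w e c) := by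
  obtain ⟨new_nonneg, new_le⟩ := h.rescaledWeight_mem_Icc (h.half_le_inactiveProb_touching e c) ω e
  refine ⟨div_nonneg new_nonneg (by linarith), (div_le_iff₀ (by linarith)).mpr (new_le.trans ?_)⟩
  nlinarith [h.nonneg e c]

-- By `inactiveProb_star_mul_le` the cost of `c` being inactive around both ends of an edge is at
-- most the product of the costs at the two ends.
lemma mul_newWeight_le_rescaledWeight (h : IsNibbleRound F w θ R B D) (ω : Activation V C) (v u : V)
    (c : C) :
    (1 - θ * R) * newWeight F w θ ω s(v, u) c ≤ rescaledWeight w θ (star F u) ω s(v, u) c := by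
  have star_pos (a : V) : 0 < inactiveProb w θ (star F a) c := by
    linarith [h.half_le_inactiveProb_star a c]
  by_cases hω : ω ∈ inactive (touching F s(v, u)) c
  · have star_inactive : ω ∈ inactive (star F u) c := fun f hf =>
      hω f (touching_mk F v u ▸ Finset.mem_union_right _ hf)
    have touching_pos : 0 < inactiveProb w θ (touching F s(v, u)) c := by
      linarith [h.half_le_inactiveProb_touching s(v, u) c]
    have inactiveProb_le : (1 - θ * R) * inactiveProb w θ (star F u) c
        ≤ inactiveProb w θ (touching F s(v, u)) c :=
      (mul_le_mul_of_nonneg_right (h.inactiveProb_star_ge v c) (star_pos u).le).trans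
        (h.inactiveProb_star_mul_le v u c)
    simp only [newWeight, rescaledWeight, Set.indicator_of_mem hω,
      Set.indicator_of_mem star_inactive, Pi.one_apply, mul_one]
    rw [mul_div_assoc', div_le_div_iff₀ touching_pos (star_pos u)]
    linarith [mul_le_mul_of_nonneg_left inactiveProb_le (h.nonneg s(v, u) c)]
  · rw [newWeight, rescaledWeight, Set.indicator_of_notMem hω, mul_zero, zero_div, mul_zero]
    exact (h.rescaledWeight_mem_Icc (h.half_le_inactiveProb_star u c) ω _).1

lemma mul_sum_star_nextWeight_le_load (h : IsNibbleRound F w θ R B D) (hε : ε < 1)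
    (ω : Activation V C) (v : V) (c : C) :
    (1 - θ * R) * (1 - ε) * ∑ e ∈ star (uncoloured F ω) v, nextWeight F w θ ε ω e c
      ≤ load F w θ v c ω := by
  have rescaled_nonneg (u : V) : 0 ≤ rescaledWeight w θ (star F u) ω s(v, u) c :=
    (h.rescaledWeight_mem_Icc (h.half_le_inactiveProb_star u c) ω _).1
  calc (1 - θ * R) * (1 - ε) * ∑ e ∈ star (uncoloured F ω) v, nextWeight F w θ ε ω e c
      = ∑ u ∈ nbhd (uncoloured F ω) v, (1 - θ * R) * newWeight F w θ ω s(v, u) c := by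
        rw [sum_star, Finset.mul_sum]
        refine Finset.sum_congr rfl fun u _ => ?_
        rw [nextWeight, mul_assoc, mul_div_cancel₀ _ (sub_pos.mpr hε).ne']
    _ ≤ ∑ u ∈ nbhd (uncoloured F ω) v, rescaledWeight w θ (star F u) ω s(v, u) c
          * (freeOfOthers F s(v, u) c).indicator 1 ω := Finset.sum_le_sum fun u hu => by
        have free : ω ∈ freeOfOthers F s(v, u) c := fun c' _ =>
          (mem_uncoloured.mp (mem_of_mem_nbhd hu)).2 c'
        rw [Set.indicator_of_mem free, Pi.one_apply, mul_one]
        exact h.mul_newWeight_le_rescaledWeight ω v u c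
    _ ≤ load F w θ v c ω := by
        refine Finset.sum_le_sum_of_subset_of_nonneg
          (fun u hu => Finset.mem_filter.mpr
            ⟨Finset.mem_univ u, (mem_uncoloured.mp (mem_of_mem_nbhd hu)).1⟩)
          fun u _ _ => mul_nonneg (rescaled_nonneg u) ?_
        exact Set.indicator_nonneg (fun _ _ => zero_le_one) ω

theorem isNibbleWeight_nextWeight (h : IsNibbleRound F w θ R B D) (hε : ε ≤ 1 / 2)
    {ω : Activation V C} (hω : IsGoodActivation F w θ ε T ω) {R' : ℝ}
    (hR' : T ≤ R' * ((1 - θ * R) * (1 - ε))) :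
    IsNibbleWeight (uncoloured F ω) (nextWeight F w θ ε ω) R' (4 * B) D where
  nonneg e c := (h.nextWeight_mem_Icc hε ω e c).1
  le_div e c := (h.nextWeight_mem_Icc hε ω e c).2.trans
    ((mul_le_mul_of_nonneg_left (h.le_div e c) (by norm_num)).trans_eq (by ring))
  one_le_sum e he := by
    simp only [nextWeight, ← Finset.sum_div]
    rw [one_le_div (by linarith)]
    exact hω.one_sub_le_sum e (mem_uncoloured.mp he).1
  card_support_le e he := by
    have support_subset :
        ({c | nextWeight F w θ ε ω e c ≠ 0} : Finset C) ⊆ ({c | w e c ≠ 0} : Finset C) :=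
      Finset.monotone_filter_right _ fun c _ => mt fun (hw : w e c = 0) => by
        simp [nextWeight, newWeight, rescaledWeight, hw]
    have BD_nonneg : 0 ≤ B * D := mul_nonneg (by linarith [h.one_le_spread]) h.degree_pos.le
    exact (Nat.cast_le.mpr (Finset.card_le_card support_subset)).trans
      ((h.card_support_le e (mem_uncoloured.mp he).1).trans (by linarith))
  card_star_le v := (Nat.cast_le.mpr (Finset.card_le_card (Finset.filter_subset_filter _
    fun _ he => (mem_uncoloured.mp he).1))).trans (h.card_star_le v)
  sum_star_le v c := by
    have factor_pos : 0 < (1 - θ * R) * (1 - ε) := by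
      refine mul_pos ?_ (by linarith)
      nlinarith [h.rate_pos, h.rate_le, h.load_nonneg, h.load_le_one]
    refine le_of_mul_le_mul_left ?_ factor_pos
    exact (h.mul_sum_star_nextWeight_le_load (by linarith) ω v c).trans
      ((hω.load_le v c).trans (hR'.trans_eq (mul_comm _ _)))

theorem supportColourable_of_uncoloured (h : IsNibbleRound F w θ R B D) (hε : ε ≤ 1 / 2)
    {ω : Activation V C} (hω : ∀ e c, ω (e, c) = true → w e c ≠ 0)
    (hcol : SupportColourable (uncoloured F ω) (nextWeight F w θ ε ω)) :
    SupportColourable F w := by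
  obtain ⟨γ, γ_pos, γ_proper⟩ := hcol
  have exists_colour (e : Sym2 V) :
      ∃ c, ω ∈ wins F e c ∨ (∀ c', ω ∉ wins F e c') ∧ c = γ e := by
    by_cases! won : ∃ c, ω ∈ wins F e c
    · exact won.imp fun c => Or.inl
    · exact ⟨γ e, Or.inr ⟨won, rfl⟩⟩
  choose γ' hγ' using exists_colour
  have γ_inactive (e : Sym2 V) (he : e ∈ uncoloured F ω) : ω ∈ inactive (touching F e) (γ e) := by
    by_contra hinactive
    refine (γ_pos e he).ne' ?_
    rw [nextWeight, newWeight, rescaledWeight, Set.indicator_of_notMem hinactive, mul_zero,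
      zero_div, zero_div]
  have ne_of_wins {e f : Sym2 V} (he : e ∈ F) (hf : f ∈ F) (hef : e ≠ f)
      (hv : ∃ v, v ∈ e ∧ v ∈ f) (won : ω ∈ wins F e (γ' e)) : γ' e ≠ γ' f := fun h_eq => by
    obtain ⟨v, hve, hvf⟩ := hv
    rcases hγ' f with won' | ⟨lost, eq_γ⟩
    · have inactive_f := won.2 f (Finset.mem_erase.mpr
        ⟨hef.symm, Finset.mem_filter.mpr ⟨hf, v, hve, hvf⟩⟩)
      exact Bool.false_ne_true (inactive_f.symm.trans (h_eq ▸ won'.1))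
    · have inactive_e := γ_inactive f (mem_uncoloured.mpr ⟨hf, lost⟩) e
        (Finset.mem_filter.mpr ⟨he, v, hvf, hve⟩)
      exact Bool.false_ne_true (inactive_e.symm.trans (eq_γ ▸ h_eq ▸ won.1))
  refine ⟨γ', fun e he => ?_, fun e he f hf hef hv => ?_⟩
  · rcases hγ' e with won | ⟨lost, eq_γ⟩
    · exact (h.nonneg _ _).lt_of_ne' (hω _ _ won.1)
    · have next_pos := γ_pos e (mem_uncoloured.mpr ⟨he, lost⟩)
      rw [eq_γ]
      linarith [(h.nextWeight_mem_Icc hε ω e (γ e)).2]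
  · rcases hγ' e with won | ⟨lost, eq_γ⟩
    · exact ne_of_wins he hf hef hv won
    · rcases hγ' f with won' | ⟨lost', eq_γ'⟩
      · exact (ne_of_wins hf he hef.symm (hv.imp fun _ => And.symm) won').symm
      · rw [eq_γ, eq_γ']
        exact γ_proper e (mem_uncoloured.mpr ⟨he, lost⟩) f (mem_uncoloured.mpr ⟨hf, lost'⟩) hef hv

lemma prob_failsAt_le [DecidableEq C] (h : IsNibbleRound F w θ R B D) {η : ℝ} (hη : 0 ≤ η)
    (hηB : 4 * η * B ≤ 1) (hηε : 6 * η * B ^ 3 ≤ ε / 2) (v : V) :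
    prob (bernoulliMass (activationProb w θ)) (failsAt F w θ ε (freeBound θ B D * R + ε) v)
      ≤ (D + B * D ^ 2) * Real.exp (-(η * ε / 2 * D)) := by
  have hμ := bernoulliMass_mem_stdSimplex h.activationProb_mem_Icc
  have hD := h.degree_pos
  have hB := h.one_le_spread
  have rate_nonneg : 0 ≤ η * D := mul_nonneg hη hD.le
  have rate_mul_le : η * D * (4 * (B / D)) ≤ 1 := by
    rw [show η * D * (4 * (B / D)) = 4 * η * B by field_simp]
    exact hηB
  have load_exponent_le :
      -(η * D) * ε + (η * D) ^ 2 * (6 * B ^ 3 / D) ≤ -(η * ε / 2 * D) := by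
    rw [show (η * D) ^ 2 * (6 * B ^ 3 / D) = η * D * (6 * η * B ^ 3) by field_simp]
    linarith [mul_le_mul_of_nonneg_left hηε rate_nonneg]
  have weight_exponent_le : -(η * D) * ε + (η * D) ^ 2 * (2 * B ^ 3 / D) ≤ -(η * ε / 2 * D) := by
    refine le_trans ?_ load_exponent_le
    gcongr
    norm_num
  refine (prob_union_le hμ _ _).trans ((add_le_add
    ((prob_biUnion_le hμ _ _).trans (Finset.sum_le_card_nsmul _ _ _ fun e he =>
      (h.prob_sum_newWeight_lt_le (Finset.mem_filter.mp he).1 rate_nonneg rate_mul_le ε).trans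
        (Real.exp_le_exp.mpr weight_exponent_le)))
    ((prob_biUnion_le hμ _ _).trans (Finset.sum_le_card_nsmul _ _ _ fun c _ =>
      (h.prob_lt_load_le v c rate_nonneg rate_mul_le ε).trans
        (Real.exp_le_exp.mpr load_exponent_le)))).trans ?_)
  rw [nsmul_eq_mul, nsmul_eq_mul, ← add_mul]
  exact mul_le_mul_of_nonneg_right (add_le_add (h.card_star_le v) (h.card_activeColours_le v))
    (Real.exp_nonneg _)

theorem exists_isGoodActivation (h : IsNibbleRound F w θ R B D) {η : ℝ} (hε : 0 ≤ ε) (hη : 0 ≤ η)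
    (hηB : 4 * η * B ≤ 1) (hηε : 6 * η * B ^ 3 ≤ ε / 2)
    (hD : (D + 1) ^ 3 * ((D + B * D ^ 2) * Real.exp (-(η * ε / 2 * D))) ≤ 1 / 4) :
    ∃ ω : Activation V C, IsGoodActivation F w θ ε (freeBound θ B D * R + ε) ω := by
  classical
  have D_pos := h.degree_pos
  have hB := h.one_le_spread
  have bound_nonneg : 0 ≤ (D + B * D ^ 2) * Real.exp (-(η * ε / 2 * D)) := by positivity
  have load_bound_nonneg : 0 ≤ freeBound θ B D * R + ε :=
    add_nonneg (mul_nonneg h.freeBound_mem_Icc.1 h.load_nonneg) hε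
  have sum_dependent_le (v : V) :
      ∑ k with ¬ Disjoint (edgesNear F v ×ˢ Finset.univ : Finset (Sym2 V × C))
        (edgesNear F k ×ˢ Finset.univ), prob (bernoulliMass (activationProb w θ))
          (failsAt F w θ ε (freeBound θ B D * R + ε) k) ≤ 1 / 4 := by
    have subset_dependent :
        ({k | ¬ Disjoint (edgesNear F v ×ˢ Finset.univ : Finset (Sym2 V × C))
          (edgesNear F k ×ˢ Finset.univ)} : Finset V)
          ⊆ ({k | ¬ Disjoint (edgesNear F v) (edgesNear F k)} : Finset V) :=
      Finset.monotone_filter_right _ fun k _ => mt fun disjoint =>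
        Finset.disjoint_product.mpr (Or.inl disjoint)
    refine (Finset.sum_le_card_nsmul _ _ _ fun k _ => h.prob_failsAt_le hη hηB hηε k).trans ?_
    rw [nsmul_eq_mul]
    exact (mul_le_mul_of_nonneg_right ((Nat.cast_le.mpr (Finset.card_le_card
      subset_dependent)).trans (h.card_dependent_le v)) bound_nonneg).trans hD
  obtain ⟨ω, hω, succeeds⟩ := lovasz_local_lemma
    (bernoulliMass_mem_stdSimplex h.activationProb_mem_Icc) dependsOn_failsAt sum_dependent_le
    fun v => ((h.prob_failsAt_le hη hηB hηε v).trans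
      (le_mul_of_one_le_left bound_nonneg (one_le_pow₀ (by linarith)))).trans hD
  refine ⟨ω, isGoodActivation_of_forall_notMem_failsAt load_bound_nonneg
    (fun e c hec hw => hω (e, c) ?_) succeeds⟩
  simp [bernoulliMass, activationProb, hec, hw]

end IsNibbleRound

end NextRound

section Iteration

universe u v

/-- Every nibble weight of maximum load `r` and fixed spread is colourable once the degree bound `D`
is large enough, uniformly in the graph and the palette. -/
def NibbleSucceeds (r : ℝ) : Prop :=
  ∀ B : ℝ, 1 ≤ B → ∃ D₀ : ℝ, ∀ D : ℝ, D₀ ≤ D →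
    ∀ (V : Type u) (C : Type v) [Fintype V] [DecidableEq V] [Fintype C] [Nonempty C]
      (F : Finset (Sym2 V)) (w : Sym2 V → C → ℝ), IsNibbleWeight F w r B D → SupportColourable F w

lemma exists_forall_ge_mul_exp_neg_le {a B : ℝ} (ha : 0 < a) (hB : 1 ≤ B) :
    ∃ D₀ : ℝ, ∀ D, D₀ ≤ D → (D + 1) ^ 3 * ((D + B * D ^ 2) * Real.exp (-(a * D))) ≤ 1 / 4 := by
  have tendsto : Filter.Tendsto (fun D : ℝ => (a * D) ^ 5 * Real.exp (-(a * D)))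
      Filter.atTop (nhds 0) :=
    (Real.tendsto_pow_mul_exp_neg_atTop_nhds_zero 5).comp (Filter.tendsto_id.const_mul_atTop ha)
  obtain ⟨D₀, hD₀⟩ := Filter.eventually_atTop.mp
    (tendsto.eventually_lt_const (show 0 < a ^ 5 / (64 * B) by positivity))
  refine ⟨max D₀ 1, fun D hD => ?_⟩
  have one_le_D : 1 ≤ D := (le_max_right _ _).trans hD
  have exp_le : D ^ 5 * Real.exp (-(a * D)) ≤ 1 / (64 * B) := by
    refine le_of_mul_le_mul_left ?_ (pow_pos ha 5)
    calc a ^ 5 * (D ^ 5 * Real.exp (-(a * D))) = (a * D) ^ 5 * Real.exp (-(a * D)) := by ring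
      _ ≤ a ^ 5 / (64 * B) := (hD₀ D ((le_max_left _ _).trans hD)).le
      _ = a ^ 5 * (1 / (64 * B)) := by ring
  have D_le : D ≤ B * D ^ 2 := by nlinarith
  calc (D + 1) ^ 3 * ((D + B * D ^ 2) * Real.exp (-(a * D)))
      ≤ (D + D) ^ 3 * ((B * D ^ 2 + B * D ^ 2) * Real.exp (-(a * D))) := by gcongr
    _ = 16 * B * (D ^ 5 * Real.exp (-(a * D))) := by ring
    _ ≤ 16 * B * (1 / (64 * B)) := by gcongr
    _ = 1 / 4 := by field_simp; norm_num

lemma freeBound_le {θ B D : ℝ} (hθ : 0 ≤ θ) (hθ' : θ ≤ 1 / 4) (hBD : 0 ≤ B / D)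
    (hBD' : B / D ≤ θ) : freeBound θ B D ≤ 1 - θ + 4 * θ ^ 2 := by
  set x := θ * (1 - 2 * θ) * (1 - B / D)
  have factor_nonneg : 0 ≤ θ * (1 - 2 * θ) := mul_nonneg hθ (by linarith)
  have x_nonneg : 0 ≤ x := mul_nonneg factor_nonneg (by linarith)
  have x_le : x ≤ θ := by nlinarith [mul_nonneg factor_nonneg hBD]
  have le_x : θ - 3 * θ ^ 2 ≤ x := by
    nlinarith [mul_nonneg hθ (sub_nonneg.mpr hBD'), mul_nonneg (mul_nonneg hθ hθ) hBD]
  have exp_le : Real.exp (-x) ≤ 1 + -x + (-x) ^ 2 :=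
    exp_le_one_add_add_sq (by rw [abs_neg, abs_of_nonneg x_nonneg]; linarith)
  calc freeBound θ B D ≤ 1 + -x + (-x) ^ 2 := exp_le
    _ ≤ 1 - θ + 4 * θ ^ 2 := by nlinarith

-- A round multiplies the load `r` by about `1 - θ` through the colours that disappear and by
-- `1 / (1 - θ * r)` through the rescaling; the net gain `θ * r * (1 - r)` pays for all errors,
-- because `1 - r ≥ 16 * θ`.
lemma freeBound_mul_add_le {θ B D r : ℝ} (hθ : 0 < θ) (hr : 1 / 32 ≤ r) (hr' : r ≤ 1 - 16 * θ)
    (hBD : 0 ≤ B / D) (hBD' : B / D ≤ θ) :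
    freeBound θ B D * r + θ ^ 2 / 8 ≤ (r - θ ^ 2 / 8) * ((1 - θ * r) * (1 - θ ^ 2 / 8)) := by
  obtain ⟨κ, hκ⟩ : ∃ κ, κ = θ ^ 2 / 8 := ⟨_, rfl⟩
  have κ_nonneg : 0 ≤ κ := by rw [hκ]; positivity
  have gain : 16 * θ ^ 2 * r ≤ θ * r * (1 - r) := by
    nlinarith [mul_le_mul_of_nonneg_left hr' (show 0 ≤ θ * r by nlinarith)]
  have κ_le : 4 * κ ≤ 16 * θ ^ 2 * r := by nlinarith [mul_le_mul_of_nonneg_left hr (sq_nonneg θ)]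
  have free_le : freeBound θ B D * r ≤ (1 - θ + 4 * θ ^ 2) * r :=
    mul_le_mul_of_nonneg_right (freeBound_le hθ.le (by linarith) hBD hBD') (by linarith)
  have factor_mem : 0 ≤ 1 - θ * r ∧ 1 - θ * r ≤ 1 := by constructor <;> nlinarith
  have error_le : r * (1 - θ * r) - 2 * κ ≤ (r - κ) * ((1 - θ * r) * (1 - κ)) := by
    have first_le : r * (1 - θ * r) ≤ 1 := by nlinarith
    nlinarith [mul_le_mul_of_nonneg_right first_le κ_nonneg,
      mul_le_mul_of_nonneg_left factor_mem.2 κ_nonneg,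
      mul_nonneg (mul_nonneg κ_nonneg κ_nonneg) factor_mem.1]
  rw [← hκ]
  nlinarith

lemma nibbleSucceeds_of_le {r : ℝ} (hr : r ≤ 1 / 32) : NibbleSucceeds.{u, v} r :=
  fun _ _ => ⟨0, fun _ _ _ _ _ _ _ _ _ _ hw => hw.supportColourable hr⟩

theorem NibbleSucceeds.of_sub {r θ : ℝ} (hθ : 0 < θ) (hr : 1 / 32 ≤ r) (hr' : r ≤ 1 - 16 * θ)
    (h : NibbleSucceeds.{u, v} (r - θ ^ 2 / 8)) : NibbleSucceeds.{u, v} r := by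
  intro B hB
  obtain ⟨D₁, hD₁⟩ := h (4 * B) (by linarith)
  set ε := θ ^ 2 / 8 with hε
  have ε_pos : 0 < ε := by positivity
  have ε_le : ε ≤ 1 / 2 := by nlinarith
  set η := ε / (12 * B ^ 3) with hη
  have η_pos : 0 < η := by positivity
  have η_mul_cube : 6 * η * B ^ 3 = ε / 2 := by
    rw [hη]
    field_simp
    norm_num
  have η_mul_le : 4 * η * B ≤ 1 := by
    nlinarith [mul_le_mul_of_nonneg_left (le_self_pow₀ hB three_ne_zero) η_pos.le]
  obtain ⟨D₂, hD₂⟩ :=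
    exists_forall_ge_mul_exp_neg_le (show 0 < η * ε / 2 by positivity) hB
  refine ⟨max (max D₁ D₂) (max B (B / θ)), fun D hD V C _ _ _ _ F w hw => ?_⟩
  obtain ⟨⟨le₁, le₂⟩, B_le, div_le⟩ :
      (D₁ ≤ D ∧ D₂ ≤ D) ∧ B ≤ D ∧ B / θ ≤ D := by
    simpa only [max_le_iff] using hD
  have hround : IsNibbleRound F w θ r B D :=
    ⟨hw, hθ, by linarith, by linarith, by linarith, hB, B_le⟩
  have ratio_le : B / D ≤ θ := (div_le_comm₀ hθ hround.degree_pos).mp div_le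
  classical
  obtain ⟨ω, hω⟩ := hround.exists_isGoodActivation ε_pos.le η_pos.le η_mul_le η_mul_cube.le
    (hD₂ D le₂)
  exact hround.supportColourable_of_uncoloured ε_le hω.weight_ne_zero <|
    hD₁ D le₁ V C _ _ <| hround.isNibbleWeight_nextWeight ε_le hω <|
      freeBound_mul_add_le hθ hr hr' hround.ratio_nonneg ratio_le

theorem nibbleSucceeds_one_sub {θ : ℝ} (hθ : 0 < θ) : NibbleSucceeds.{u, v} (1 - 16 * θ) := by
  have κ_pos : 0 < θ ^ 2 / 8 := by positivity
  have of_le (n : ℕ) : ∀ r ≤ 1 - 16 * θ, r ≤ 1 / 32 + n * (θ ^ 2 / 8) →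
      NibbleSucceeds.{u, v} r := by
    induction n with
    | zero => exact fun r _ hr => nibbleSucceeds_of_le (by simpa using hr)
    | succ n ih =>
      intro r hr hrn
      push_cast at hrn
      obtain small | large := le_total r (1 / 32)
      · exact nibbleSucceeds_of_le small
      · exact .of_sub hθ large hr (ih _ (by linarith) (by linarith))
  obtain ⟨n, hn⟩ := exists_nat_ge (1 / (θ ^ 2 / 8))
  rw [div_le_iff₀ κ_pos] at hn
  exact of_le n _ le_rfl (by linarith)

end Iteration

section Lists

universe u v

/-- The lists `L` on the edge set `F` have sizes between `D / B` and `B * D`, degrees are at most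
`D` and the uniform weights on the lists have total load at most `R` at every vertex. -/
structure IsBalancedLists {V C : Type*} [DecidableEq V] (F : Finset (Sym2 V))
    (L : Sym2 V → Finset C) (R B D : ℝ) : Prop where
  nonempty : ∀ e ∈ F, (L e).Nonempty
  one_div_card_le : ∀ e ∈ F, 1 / ((L e).card : ℝ) ≤ B / D
  card_le : ∀ e ∈ F, ((L e).card : ℝ) ≤ B * D
  card_star_le : ∀ v, ((star F v).card : ℝ) ≤ D
  sum_one_div_card_le : ∀ v, ∑ e ∈ star F v, 1 / ((L e).card : ℝ) ≤ R

/-- The uniform weights on the lists of the edges of `F`. -/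
noncomputable def uniformWeight {V C : Type*} [DecidableEq V] [DecidableEq C] (F : Finset (Sym2 V))
    (L : Sym2 V → Finset C) (e : Sym2 V) (c : C) : ℝ :=
  if e ∈ F ∧ c ∈ L e then 1 / ((L e).card : ℝ) else 0

lemma IsBalancedLists.isNibbleWeight_uniformWeight {V C : Type*} [DecidableEq V]
    [Fintype C] [DecidableEq C] {F : Finset (Sym2 V)} {L : Sym2 V → Finset C} {R B D : ℝ}
    (h : IsBalancedLists F L R B D) (hBD : 0 ≤ B / D) :
    IsNibbleWeight F (uniformWeight F L) R B D where
  nonneg e c := by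
    rw [uniformWeight]
    positivity
  le_div e c := by
    rw [uniformWeight]
    split_ifs with hec
    exacts [h.one_div_card_le e hec.1, hBD]
  one_le_sum e he := by
    have card_ne_zero : ((L e).card : ℝ) ≠ 0 :=
      Nat.cast_ne_zero.mpr (h.nonempty e he).card_ne_zero
    simp [uniformWeight, he, card_ne_zero]
  card_support_le e he := by
    refine (Nat.cast_le.mpr (Finset.card_le_card fun c hc => ?_)).trans (h.card_le e he)
    by_contra notMem
    exact (Finset.mem_filter.mp hc).2 (if_neg fun hec => notMem hec.2)
  card_star_le := h.card_star_le
  sum_star_le v c := (Finset.sum_le_sum fun e _ => by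
    rw [uniformWeight]
    split_ifs
    exacts [le_rfl, by positivity]).trans (h.sum_one_div_card_le v)

lemma exists_subset_card_le_and_one_div_card_le {C : Type*} (A : Finset C) {s : ℝ} (hs : 0 < s) :
    ∃ A' ⊆ A, (A'.card : ℝ) ≤ s + 1 ∧ 1 / (A'.card : ℝ) ≤ 1 / (A.card : ℝ) + 1 / s
      ∧ (A.Nonempty → A'.Nonempty) := by
  have le_ceil : s ≤ ⌈s⌉₊ := Nat.le_ceil s
  have ceil_le : (⌈s⌉₊ : ℝ) ≤ s + 1 := (Nat.ceil_lt_add_one hs.le).le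
  obtain small | large := le_total A.card ⌈s⌉₊
  · refine ⟨A, subset_rfl, (Nat.cast_le.mpr small).trans ceil_le, ?_, id⟩
    exact le_add_of_nonneg_right (by positivity)
  · obtain ⟨A', hA', hcard⟩ := Finset.exists_subset_card_eq large
    refine ⟨A', hA', hcard ▸ ceil_le, hcard ▸ ?_, fun _ => Finset.card_pos.mp ?_⟩
    · exact (one_div_le_one_div_of_le hs le_ceil).trans (le_add_of_nonneg_left (by positivity))
    · exact hcard ▸ Nat.ceil_pos.mpr hs

/-- A proper colouring of the edge set `F` from the lists `L`. It is `IsLEdgeColouring` for edge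
sets and palettes of any type. -/
def IsListEdgeColouring {V C : Type*} (F : Finset (Sym2 V)) (L : Sym2 V → Finset C)
    (γ : Sym2 V → C) : Prop :=
  (∀ e ∈ F, γ e ∈ L e) ∧ ∀ e ∈ F, ∀ f ∈ F, e ≠ f → (∃ v, v ∈ e ∧ v ∈ f) → γ e ≠ γ f

lemma SupportColourable.exists_isListEdgeColouring {V C : Type*} [DecidableEq V] [DecidableEq C]
    {F : Finset (Sym2 V)} {L : Sym2 V → Finset C}
    (h : SupportColourable F (uniformWeight F L)) : ∃ γ, IsListEdgeColouring F L γ := by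
  obtain ⟨γ, γ_pos, γ_proper⟩ := h
  refine ⟨γ, fun e he => ?_, γ_proper⟩
  by_contra notMem
  exact (γ_pos e he).ne' (if_neg fun h => notMem h.2)

lemma IsBalancedLists.exists_subset {V C : Type*} [DecidableEq V] {F : Finset (Sym2 V)}
    {L : Sym2 V → Finset C} {δ ν D : ℝ} (hδ : 0 < δ) (hν : 0 < ν) (hD : 1 ≤ D)
    (hlist : ∀ e ∈ F, ν * D ≤ ((L e).card : ℝ)) (hstar : ∀ v, ((star F v).card : ℝ) ≤ D)
    (hload : ∀ v, ∑ e ∈ star F v, 1 / ((L e).card : ℝ) ≤ 1 - δ) :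
    ∃ L' : Sym2 V → Finset C, (∀ e, L' e ⊆ L e) ∧
      IsBalancedLists F L' (1 - δ / 2) (1 / ν + δ / 2 + (2 / δ + 1)) D := by
  have ν_inv_pos : 0 < 1 / ν := one_div_pos.mpr hν
  have δ_inv_pos : 0 < 2 / δ := div_pos two_pos hδ
  choose L' L'_subset L'_card_le L'_one_div_le L'_nonempty using fun e =>
    exists_subset_card_le_and_one_div_card_le (L e) (show 0 < 2 / δ * D by positivity)
  rw [show 1 / (2 / δ * D) = δ / 2 / D by field_simp] at L'_one_div_le
  refine ⟨L', L'_subset, fun e he => L'_nonempty e ?_, fun e he => ?_, fun e _ => ?_, hstar,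
    fun v => ?_⟩
  · exact Finset.card_pos.mp (Nat.cast_pos.mp ((by positivity : 0 < ν * D).trans_le (hlist e he)))
  · calc 1 / ((L' e).card : ℝ) ≤ 1 / (ν * D) + δ / 2 / D := (L'_one_div_le e).trans
          (add_le_add_left (one_div_le_one_div_of_le (by positivity) (hlist e he)) _)
      _ = (1 / ν + δ / 2) / D := by field_simp
      _ ≤ (1 / ν + δ / 2 + (2 / δ + 1)) / D :=
        div_le_div_of_nonneg_right (by linarith) (by linarith)
  · nlinarith [L'_card_le e]
  · calc ∑ e ∈ star F v, 1 / ((L' e).card : ℝ)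
        ≤ ∑ e ∈ star F v, (1 / ((L e).card : ℝ) + δ / 2 / D) :=
          Finset.sum_le_sum fun e _ => L'_one_div_le e
      _ = ∑ e ∈ star F v, 1 / ((L e).card : ℝ) + (star F v).card * (δ / 2 / D) := by
          rw [Finset.sum_add_distrib, Finset.sum_const, nsmul_eq_mul]
      _ ≤ (1 - δ) + D * (δ / 2 / D) := by
          gcongr
          exacts [hload v, hstar v]
      _ = 1 - δ / 2 := by field_simp; ring

theorem NibbleSucceeds.exists_isListEdgeColouring {R B : ℝ} (h : NibbleSucceeds.{u, v} R)
    (hB : 1 ≤ B) :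
    ∃ D₀ : ℝ, ∀ D : ℝ, D₀ ≤ D → ∀ (V : Type u) [Fintype V] [DecidableEq V] (F : Finset (Sym2 V))
      (C : Type v) [Nonempty C] (L : Sym2 V → Finset C), IsBalancedLists F L R B D →
      ∃ γ, IsListEdgeColouring F L γ := by
  obtain ⟨D₀, hD₀⟩ := h B hB
  refine ⟨max D₀ 0, fun D hD V _ _ F C _ L hL => ?_⟩
  obtain ⟨D₀_le, D_nonneg⟩ := max_le_iff.mp hD
  classical
  let palette : Finset C := insert (Classical.arbitrary C) (F.biUnion L)
  have : Nonempty palette := ⟨⟨_, Finset.mem_insert_self _ _⟩⟩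
  let L' (e : Sym2 V) : Finset palette := (L e).subtype (· ∈ palette)
  have card_eq (e : Sym2 V) (he : e ∈ F) : (L' e).card = (L e).card := by
    rw [Finset.card_subtype, Finset.filter_true_of_mem]
    exact fun c hc => Finset.mem_insert_of_mem (Finset.mem_biUnion.mpr ⟨e, he, hc⟩)
  have hL' : IsBalancedLists F L' R B D := by
    refine ⟨fun e he => ?_, fun e he => ?_, fun e he => ?_, hL.card_star_le, fun v => ?_⟩
    · exact Finset.card_pos.mp ((card_eq e he).symm ▸ (hL.nonempty e he).card_pos)
    · exact (card_eq e he).symm ▸ hL.one_div_card_le e he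
    · exact (card_eq e he).symm ▸ hL.card_le e he
    · rw [Finset.sum_congr rfl fun e he => by rw [card_eq e (Finset.mem_filter.mp he).1]]
      exact hL.sum_one_div_card_le v
  obtain ⟨γ, γ_mem, γ_proper⟩ := (hD₀ D D₀_le V palette F _ (hL'.isNibbleWeight_uniformWeight
    (div_nonneg (by linarith) D_nonneg))).exists_isListEdgeColouring
  exact ⟨fun e => γ e, fun e he => Finset.mem_subtype.mp (γ_mem e he),
    fun e he f hf hef hv h_eq => γ_proper e he f hf hef hv (Subtype.ext h_eq)⟩

end Lists

section MatchingPolytope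

variable {V : Type} [Fintype V] [DecidableEq V] {G : SimpleGraph V} [DecidableRel G.Adj]

lemma sum_filter_mem_le_one_of_mem_matchingPolytope {x : G.edgeFinset → ℝ}
    (hx : x ∈ matchingPolytope G) (v : V) :
    ∑ e ∈ ({e | v ∈ e.1} : Finset G.edgeFinset), x e ≤ 1 := by
  have isLinearMap :
      IsLinearMap ℝ fun x : G.edgeFinset → ℝ => ∑ e ∈ ({e | v ∈ e.1} : Finset G.edgeFinset), x e :=
    ⟨fun x y => Finset.sum_add_distrib, fun a x => (Finset.mul_sum _ _ _).symm⟩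
  refine convexHull_min ?_ (convex_halfSpace_le isLinearMap 1) hx
  rintro _ ⟨M, ⟨-, disjoint⟩, rfl⟩
  rw [Set.mem_ofPred_eq, Finset.sum_boole]
  refine Nat.cast_le_one.mpr (Finset.card_le_one.mpr fun e he f hf => ?_)
  simp only [Finset.mem_filter, Finset.mem_univ, true_and] at he hf
  by_contra hef
  exact disjoint e he.2 f hf.2 (mt Subtype.ext hef) v ⟨he.1, hf.1⟩

lemma sum_incidenceFinset_le_of_mem_smul_matchingPolytope {g : Sym2 V → ℝ} {s : ℝ} (hs : 0 ≤ s)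
    (hg : (fun e : G.edgeFinset => g e) ∈ s • matchingPolytope G) (v : V) :
    ∑ e ∈ G.incidenceFinset v, g e ≤ s := by
  obtain ⟨x, hx, hxg⟩ := hg
  calc ∑ e ∈ G.incidenceFinset v, g e = ∑ e ∈ ({e | v ∈ e.1} : Finset G.edgeFinset), g e := by
        rw [G.incidenceFinset_eq_filter, Finset.sum_filter, Finset.sum_filter,
          Finset.sum_coe_sort G.edgeFinset fun e => if v ∈ e then g e else 0]
    _ = s * ∑ e ∈ ({e | v ∈ e.1} : Finset G.edgeFinset), x e := by
        rw [Finset.mul_sum]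
        exact Finset.sum_congr rfl fun e _ => (congrFun hxg e).symm
    _ ≤ s := mul_le_of_le_one_right hs (sum_filter_mem_le_one_of_mem_matchingPolytope hx v)

end MatchingPolytope

end EdgeNibble

open EdgeNibble in
theorem stmt_3_general.{u, v} (δ ν : ℝ) (hδ : 0 < δ) (hν : 0 < ν) :
    ∃ Δ₀ : ℝ, ∀ Δ : ℝ, Δ₀ ≤ Δ →
    ∀ (V : Type u) [Fintype V] [DecidableEq V] (G : SimpleGraph V) [DecidableRel G.Adj]
      (C : Type v) [Nonempty C] (L : Sym2 V → Finset C),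
      (G.maxDegree : ℝ) ≤ Δ →
      (∀ e ∈ G.edgeFinset, ν * Δ ≤ ((L e).card : ℝ)) →
      (∀ v, ∑ e ∈ G.incidenceFinset v, 1 / ((L e).card : ℝ) ≤ 1 - δ) →
      ∃ γ : Sym2 V → C, IsListEdgeColouring G.edgeFinset L γ := by
  have half : (1 : ℝ) - 16 * (δ / 32) = 1 - δ / 2 := by ring
  have spread : 1 ≤ 1 / ν + δ / 2 + (2 / δ + 1) := by
    linarith [one_div_pos.mpr hν, div_pos two_pos hδ]
  obtain ⟨D₀, hD₀⟩ := NibbleSucceeds.exists_isListEdgeColouring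
    (half ▸ nibbleSucceeds_one_sub (show 0 < δ / 32 by positivity)) spread
  refine ⟨max D₀ 1, fun Δ hΔ V _ _ G _ C _ L hmax hlist hload => ?_⟩
  obtain ⟨D₀_le, one_le_Δ⟩ := max_le_iff.mp hΔ
  have star_eq (v : V) : star G.edgeFinset v = G.incidenceFinset v :=
    (G.incidenceFinset_eq_filter v).symm
  have card_star_le (v : V) : ((star G.edgeFinset v).card : ℝ) ≤ Δ := by
    rw [star_eq, G.card_incidenceFinset_eq_degree]
    exact (Nat.cast_le.mpr (G.degree_le_maxDegree v)).trans hmax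
  obtain ⟨L', L'_subset, hL'⟩ := IsBalancedLists.exists_subset hδ hν one_le_Δ hlist card_star_le
    fun v => star_eq v ▸ hload v
  obtain ⟨γ, γ_mem, γ_proper⟩ := hD₀ Δ D₀_le V G.edgeFinset C L' hL'
  exact ⟨γ, fun e he => L'_subset e (γ_mem e he), γ_proper⟩

theorem stmt_3 :
    ∀ δ ν : ℝ, 0 < δ → δ < 1 → 0 < ν →
    ∃ Δ₀ : ℝ, ∀ Δ : ℝ, Δ₀ ≤ Δ →
    ∀ (V : Type) [Fintype V] [DecidableEq V]
      (G : SimpleGraph V) [DecidableRel G.Adj] (L : Sym2 V → Finset ℕ),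
      (G.maxDegree : ℝ) ≤ Δ →
      -- (i)
      (∀ e ∈ G.edgeFinset, ν * Δ ≤ ((L e).card : ℝ)) →
      -- (ii)
      (fun e : G.edgeFinset => (1 : ℝ) / ((L (e : Sym2 V)).card : ℝ)) ∈
        (1 - δ) • matchingPolytope G →
      ∃ γ : Sym2 V → ℕ, IsLEdgeColouring G L γ := by
  intro δ ν hδ hδ' hν
  obtain ⟨Δ₀, hΔ₀⟩ := stmt_3_general δ ν hδ hν
  refine ⟨Δ₀, fun Δ hΔ V _ _ G _ L hmax hlist hx => ?_⟩
  simpa [EdgeNibble.IsListEdgeColouring, IsLEdgeColouring] using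
    hΔ₀ Δ hΔ V G ℕ L hmax hlist fun v =>
      EdgeNibble.sum_incidenceFinset_le_of_mem_smul_matchingPolytope (sub_nonneg.mpr hδ'.le) hx v
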